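/- arXiv:1807.08358 — 2 statements merged into one kernel-verified Lean document; each statement's English description precedes it below -/
import Mathlib

section
/- Let G be a finite group of order 2^m with m ≥ 8 and nilpotency class m − 3 (i.e., G is a 2-group of coclass 3 and order at least 2^8). If the automorphism group Aut(G) is not a 2-group, then G is isomorphic to K_{m−6}^i for some i ∈ {1, 2, 3, 4, 5, 6}, where K_n^i are defined as follows: the common relations together with (i=1) g1² = 1, g2² = g3·t, g5^{g4} = g5; (i=2) g1² = 1, g2² = g3·t^{1+2^n}, g5^{g4} = g5; (i=3) g1² = t^{2^n}, g2² = g3·t, g5^{g4} = g5; (i=4) g1² = 1, g2² = g3·t, g5^{g4} = g5·t^{2^n}; (i=5) g1² = 1, g2² = g3·t^{1+2^n}, g5^{g4} = g5·t^{2^n}; (i=6) g1² = t^{2^n}, g2² = g3·t, g5^{g4} = g5·t^{2^n}. -/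
/-- Generators `g₁, g₂, g₃, g₄, g₅, t` for the coclass-`3` groups `Kₙⁱ`. -/
inductive KGen : Type
  | g1 | g2 | g3 | g4 | g5 | t

namespace KGen

def a1 : FreeGroup KGen := FreeGroup.of KGen.g1
def a2 : FreeGroup KGen := FreeGroup.of KGen.g2
def a3 : FreeGroup KGen := FreeGroup.of KGen.g3
def a4 : FreeGroup KGen := FreeGroup.of KGen.g4
def a5 : FreeGroup KGen := FreeGroup.of KGen.g5
def tt : FreeGroup KGen := FreeGroup.of KGen.t

/-- Conjugation `x ^ y = y⁻¹ * x * y`. -/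
def cnj (x y : FreeGroup KGen) : FreeGroup KGen := y⁻¹ * x * y

/-- The common relators: `g₂^g₁ = g₂g₃`, `g₃^g₁ = g₃t`, `g₃^g₂ = g₃`, `g₃² = t⁻¹`,
`g₄^g₁ = g₄`, `g₄^g₂ = g₄`, `g₄^g₃ = g₄`, `g₄² = 1`, `g₅^g₁ = g₅`, `g₅^g₂ = g₅`,
`g₅^g₃ = g₅`, `g₅² = 1`, `t^g₁ = t⁻¹`, `t^g₂ = t`, `t^g₃ = t`, `t^g₄ = t`, `t^g₅ = t`,
`t^(2^(n+1)) = 1`. -/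
def commonRels (n : ℕ) : Set (FreeGroup KGen) :=
  {cnj a2 a1 * (a2 * a3)⁻¹,
   cnj a3 a1 * (a3 * tt)⁻¹,
   cnj a3 a2 * a3⁻¹,
   a3 ^ 2 * tt,
   cnj a4 a1 * a4⁻¹,
   cnj a4 a2 * a4⁻¹,
   cnj a4 a3 * a4⁻¹,
   a4 ^ 2,
   cnj a5 a1 * a5⁻¹,
   cnj a5 a2 * a5⁻¹,
   cnj a5 a3 * a5⁻¹,
   a5 ^ 2,
   cnj tt a1 * tt,
   cnj tt a2 * tt⁻¹,
   cnj tt a3 * tt⁻¹,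
   cnj tt a4 * tt⁻¹,
   cnj tt a5 * tt⁻¹,
   tt ^ (2 ^ (n + 1))}

end KGen

open KGen

/-- `Kₙ¹`: common relators together with `g₁² = 1`, `g₂² = g₃t`, `g₅^g₄ = g₅`. -/
abbrev K1 (n : ℕ) : Type :=
  PresentedGroup (commonRels n ∪
    {a1 ^ 2, a2 ^ 2 * (a3 * tt)⁻¹, cnj a5 a4 * a5⁻¹})

/-- `Kₙ²`: common relators together with `g₁² = 1`, `g₂² = g₃t^(1+2^n)`, `g₅^g₄ = g₅`. -/
abbrev K2 (n : ℕ) : Type :=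
  PresentedGroup (commonRels n ∪
    {a1 ^ 2, a2 ^ 2 * (a3 * tt ^ (1 + 2 ^ n))⁻¹, cnj a5 a4 * a5⁻¹})

/-- `Kₙ³`: common relators together with `g₁² = t^(2^n)`, `g₂² = g₃t`, `g₅^g₄ = g₅`. -/
abbrev K3 (n : ℕ) : Type :=
  PresentedGroup (commonRels n ∪
    {a1 ^ 2 * (tt ^ (2 ^ n))⁻¹, a2 ^ 2 * (a3 * tt)⁻¹, cnj a5 a4 * a5⁻¹})

/-- `Kₙ⁴`: common relators together with `g₁² = 1`, `g₂² = g₃t`, `g₅^g₄ = g₅t^(2^n)`. -/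
abbrev K4 (n : ℕ) : Type :=
  PresentedGroup (commonRels n ∪
    {a1 ^ 2, a2 ^ 2 * (a3 * tt)⁻¹, cnj a5 a4 * (a5 * tt ^ (2 ^ n))⁻¹})

/-- `Kₙ⁵`: common relators together with `g₁² = 1`, `g₂² = g₃t^(1+2^n)`,
`g₅^g₄ = g₅t^(2^n)`. -/
abbrev K5 (n : ℕ) : Type :=
  PresentedGroup (commonRels n ∪
    {a1 ^ 2, a2 ^ 2 * (a3 * tt ^ (1 + 2 ^ n))⁻¹, cnj a5 a4 * (a5 * tt ^ (2 ^ n))⁻¹})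

/-- `Kₙ⁶`: common relators together with `g₁² = t^(2^n)`, `g₂² = g₃t`,
`g₅^g₄ = g₅t^(2^n)`. -/
abbrev K6 (n : ℕ) : Type :=
  PresentedGroup (commonRels n ∪
    {a1 ^ 2 * (tt ^ (2 ^ n))⁻¹, a2 ^ 2 * (a3 * tt)⁻¹, cnj a5 a4 * (a5 * tt ^ (2 ^ n))⁻¹})

open KGen
/-! ## Presentations -/

/-- The relations of `K_n^i` on a family of elements, uniformly in `i`. -/
structure KRel (n α β γ : ℕ) {H : Type*} [Group H] (f : KGen → H) : Prop where
  r1 : (f .g1)⁻¹ * f .g2 * f .g1 = f .g2 * f .g3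
  r2 : (f .g1)⁻¹ * f .g3 * f .g1 = f .g3 * f .t
  r3 : (f .g2)⁻¹ * f .g3 * f .g2 = f .g3
  r4 : f .g3 ^ 2 = (f .t)⁻¹
  r5 : (f .g1)⁻¹ * f .g4 * f .g1 = f .g4
  r6 : (f .g2)⁻¹ * f .g4 * f .g2 = f .g4
  r7 : (f .g3)⁻¹ * f .g4 * f .g3 = f .g4
  r8 : f .g4 ^ 2 = 1
  r9 : (f .g1)⁻¹ * f .g5 * f .g1 = f .g5
  r10 : (f .g2)⁻¹ * f .g5 * f .g2 = f .g5
  r11 : (f .g3)⁻¹ * f .g5 * f .g3 = f .g5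
  r12 : f .g5 ^ 2 = 1
  r13 : (f .g1)⁻¹ * f .t * f .g1 = (f .t)⁻¹
  r14 : (f .g2)⁻¹ * f .t * f .g2 = f .t
  r15 : (f .g3)⁻¹ * f .t * f .g3 = f .t
  r16 : (f .g4)⁻¹ * f .t * f .g4 = f .t
  r17 : (f .g5)⁻¹ * f .t * f .g5 = f .t
  r18 : f .t ^ (2 ^ (n + 1)) = 1
  s1 : f .g1 ^ 2 = f .t ^ (α * 2 ^ n)
  s2 : f .g2 ^ 2 = f .g3 * f .t ^ (1 + β * 2 ^ n)
  s3 : (f .g4)⁻¹ * f .g5 * f .g4 = f .g5 * f .t ^ (γ * 2 ^ n)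

theorem KRel_iff {n α β γ : ℕ} {H : Type*} [Group H] (f : KGen → H)
    {U V W : FreeGroup KGen}
    (hU : FreeGroup.lift f U = 1 ↔ f .g1 ^ 2 = f .t ^ (α * 2 ^ n))
    (hV : FreeGroup.lift f V = 1 ↔ f .g2 ^ 2 = f .g3 * f .t ^ (1 + β * 2 ^ n))
    (hW : FreeGroup.lift f W = 1 ↔ (f .g4)⁻¹ * f .g5 * f .g4 = f .g5 * f .t ^ (γ * 2 ^ n)) :
    (∀ r ∈ commonRels n ∪ {U, V, W}, FreeGroup.lift f r = 1) ↔ KRel n α β γ f := by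
  have key : (∀ r ∈ commonRels n ∪ {U, V, W}, FreeGroup.lift f r = 1) ↔
      ((∀ r ∈ commonRels n, FreeGroup.lift f r = 1) ∧ FreeGroup.lift f U = 1 ∧
        FreeGroup.lift f V = 1 ∧ FreeGroup.lift f W = 1) := by
    simp only [Set.mem_union, Set.mem_insert_iff, Set.mem_singleton_iff, or_imp, forall_and,
      forall_eq]
  rw [key, hU, hV, hW]
  simp only [commonRels, Set.mem_insert_iff, Set.mem_singleton_iff, or_imp, forall_and,
      forall_eq, cnj, a1, a2, a3, a4, a5, tt, map_mul, map_inv, map_pow, FreeGroup.lift_apply_of,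
      mul_eq_one_iff_eq_inv, inv_inv]
  constructor
  · rintro ⟨⟨h1, h2, h3, h4, h5, h6, h7, h8, h9, h10, h11, h12, h13, h14, h15, h16, h17, h18⟩,
      h19, h20, h21⟩
    exact ⟨h1, h2, h3, h4, h5, h6, h7, h8, h9, h10, h11, h12, h13, h14, h15, h16, h17, h18,
      h19, h20, h21⟩
  · rintro ⟨h1, h2, h3, h4, h5, h6, h7, h8, h9, h10, h11, h12, h13, h14, h15, h16, h17, h18,
      h19, h20, h21⟩
    exact ⟨⟨h1, h2, h3, h4, h5, h6, h7, h8, h9, h10, h11, h12, h13, h14, h15, h16, h17, h18⟩,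
      h19, h20, h21⟩

/-- Counting normal forms. -/
theorem card_bound {K : Type*} [Group K] (a b c d : K) (N : ℕ) (hN : 0 < N)
    (hb : b ^ N = 1) (hab : a⁻¹ * b * a ∈ Subgroup.zpowers b) (ha : a ^ 2 ∈ Subgroup.zpowers b)
    (hc : c ^ 2 = 1) (hd : d ^ 2 = 1) (hcb : Commute c b) (hdb : Commute d b)
    (hca : Commute c a) (hda : Commute d a)
    (hcd : ∃ w ∈ Subgroup.zpowers b, c * d = d * c * w)
    (hgen : Subgroup.closure {a, b, c, d} = ⊤) :
    Finite K ∧ Nat.card K ≤ 8 * N := by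
  set B := Subgroup.zpowers b with hB
  have hbfin : IsOfFinOrder b := isOfFinOrder_iff_pow_eq_one.mpr ⟨N, hN, hb⟩
  have hconj : ∀ u ∈ B, a⁻¹ * u * a ∈ B := by
    rintro _ ⟨i, rfl⟩
    have : a⁻¹ * b ^ i * a = (a⁻¹ * b * a) ^ i := by
      have := conj_zpow (i := i) (a := a⁻¹) (b := b)
      simpa using this.symm
    simp only [this]
    exact Subgroup.zpow_mem _ hab i
  have hcB : ∀ u ∈ B, u * c = c * u := by
    rintro _ ⟨i, rfl⟩
    exact ((hcb.zpow_right i).eq).symm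
  have hdB : ∀ u ∈ B, u * d = d * u := by
    rintro _ ⟨i, rfl⟩
    exact ((hdb.zpow_right i).eq).symm
  let S : K → Prop := fun g => ∃ (l k j : Fin 2), ∃ u ∈ B,
    g = d ^ (l : ℕ) * c ^ (k : ℕ) * a ^ (j : ℕ) * u
  have hSB : ∀ g u, S g → u ∈ B → S (g * u) := by
    rintro g u ⟨l, k, j, v, hv, rfl⟩ hu
    exact ⟨l, k, j, v * u, B.mul_mem hv hu, by group⟩
  have hSa : ∀ g, S g → S (g * a) := by
    rintro g ⟨l, k, j, v, hv, rfl⟩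
    have e : d ^ (l : ℕ) * c ^ (k : ℕ) * a ^ (j : ℕ) * v * a
        = d ^ (l : ℕ) * c ^ (k : ℕ) * (a ^ (j : ℕ) * a) * (a⁻¹ * v * a) := by group
    rw [e]
    fin_cases j
    · exact ⟨l, k, 1, _, hconj v hv, by simp⟩
    · exact ⟨l, k, 0, a ^ 2 * (a⁻¹ * v * a), B.mul_mem ha (hconj v hv), by simp [pow_two, mul_assoc]⟩
  have hc' : c * c = 1 := by rw [← pow_two, hc]
  have hd' : d * d = 1 := by rw [← pow_two, hd]
  have hSc : ∀ g, S g → S (g * c) := by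
    rintro g ⟨l, k, j, v, hv, rfl⟩
    have e : d ^ (l : ℕ) * c ^ (k : ℕ) * a ^ (j : ℕ) * v * c
        = d ^ (l : ℕ) * (c ^ (k : ℕ) * c) * a ^ (j : ℕ) * v := by
      rw [mul_assoc _ v c, hcB v hv, ← mul_assoc, mul_assoc _ (a ^ (j : ℕ)) c,
        ← (hca.pow_right j).eq]
      group
    rw [e]
    fin_cases k
    · exact ⟨l, 1, j, _, hv, by simp⟩
    · exact ⟨l, 0, j, _, hv, by simp [hc']⟩
  obtain ⟨w, hw, hcdw⟩ := hcd
  have hSd : ∀ g, S g → S (g * d) := by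
    rintro g ⟨l, k, j, v, hv, rfl⟩
    have e : d ^ (l : ℕ) * c ^ (k : ℕ) * a ^ (j : ℕ) * v * d
        = d ^ (l : ℕ) * (c ^ (k : ℕ) * d) * a ^ (j : ℕ) * v := by
      rw [mul_assoc _ v d, hdB v hv, ← mul_assoc, mul_assoc _ (a ^ (j : ℕ)) d,
        ← (hda.pow_right j).eq]
      group
    have e2 : S (d ^ (l : ℕ) * d * c ^ (k : ℕ)) := by
      fin_cases l
      · exact ⟨1, k, 0, 1, B.one_mem, by simp⟩
      · exact ⟨0, k, 0, 1, B.one_mem, by simp [hd']⟩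
    have e3 : S (d ^ (l : ℕ) * (c ^ (k : ℕ) * d)) := by
      fin_cases k
      · simpa using e2
      · have := hSB _ w e2 hw
        simpa [hcdw, mul_assoc] using this
    rw [e]
    apply hSB _ _ _ hv
    fin_cases j
    · simpa using e3
    · simpa using hSa _ e3
  have hS : ∀ g, S g := by
    intro g
    have hg : g ∈ Subgroup.closure {a, b, c, d} := by rw [hgen]; trivial
    induction hg using Subgroup.closure_induction_right with
    | one => exact ⟨0, 0, 0, 1, B.one_mem, by simp⟩
    | mul_right x hx y hy ih =>
      rcases hy with rfl | rfl | rfl | rfl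
      · exact hSa _ ih
      · exact hSB _ _ ih (Subgroup.mem_zpowers _)
      · exact hSc _ ih
      · exact hSd _ ih
    | mul_inv_cancel x hx y hy ih =>
      rcases hy with rfl | rfl | rfl | rfl
      · have : x * y⁻¹ = x * y * (y ^ 2)⁻¹ := by group
        rw [this]
        exact hSB _ _ (hSa _ ih) (B.inv_mem ha)
      · exact hSB _ _ ih (B.inv_mem (Subgroup.mem_zpowers _))
      · rw [inv_eq_of_mul_eq_one_left hc']; exact hSc _ ih
      · rw [inv_eq_of_mul_eq_one_left hd']; exact hSd _ ih
  have hBfin : Finite B := by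
    rw [hB]
    exact (finite_zpowers.mpr hbfin).to_subtype
  let F : Fin 2 × Fin 2 × Fin 2 × B → K :=
    fun x => d ^ (x.1 : ℕ) * c ^ (x.2.1 : ℕ) * a ^ (x.2.2.1 : ℕ) * x.2.2.2
  have hF : Function.Surjective F := by
    intro g
    obtain ⟨l, k, j, u, hu, rfl⟩ := hS g
    exact ⟨(l, k, j, ⟨u, hu⟩), rfl⟩
  refine ⟨Finite.of_surjective F hF, (Nat.card_le_card_of_surjective F hF).trans ?_⟩
  have : Nat.card B ≤ N := by
    rw [hB, Nat.card_zpowers]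
    exact orderOf_le_of_pow_eq_one hN hb
  simp only [Nat.card_prod, Nat.card_eq_fintype_card (α := Fin 2), Fintype.card_fin]
  omega

theorem KRel.card_bound {n α β γ : ℕ} {H : Type*} [Group H] {f : KGen → H}
    (h : KRel n α β γ f) (hgen : Subgroup.closure (Set.range f) = ⊤) :
    Finite H ∧ Nat.card H ≤ 2 ^ (n + 6) := by
  have ht : f .t = (f .g3 ^ 2)⁻¹ := by rw [h.r4, inv_inv]
  have hcom : Commute (f .g3) (f .t) := by rw [ht]; exact ((Commute.refl _).pow_right 2).inv_right
  have h4 : f .g2 ^ 4 = f .t := by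
    have : f .g2 ^ 4 = (f .g2 ^ 2) ^ 2 := by rw [← pow_mul]
    rw [this, h.s2, (hcom.pow_right _).mul_pow, h.r4, ← pow_mul, add_mul, pow_add, mul_assoc,
      ← pow_succ, mul_comm β, pow_mul _ (2 ^ (n + 1)), h.r18]
    group
  have htm : f .t ∈ Subgroup.zpowers (f .g2) := by
    rw [← h4]; exact Subgroup.pow_mem _ (Subgroup.mem_zpowers _) _
  have h3m : f .g3 ∈ Subgroup.zpowers (f .g2) := by
    have : f .g3 = f .g2 ^ 2 * (f .t ^ (1 + β * 2 ^ n))⁻¹ := by rw [h.s2]; group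
    rw [this]
    exact Subgroup.mul_mem _ (Subgroup.pow_mem _ (Subgroup.mem_zpowers _) _)
      (Subgroup.inv_mem _ (Subgroup.pow_mem _ htm _))
  have comm_of : ∀ x y : H, x⁻¹ * y * x = y → Commute y x := by
    intro x y hxy
    have : y * x = x * y := by
      calc y * x = x * (x⁻¹ * y * x) := by group
        _ = x * y := by rw [hxy]
    exact this
  have := _root_.card_bound (f .g1) (f .g2) (f .g4) (f .g5) (2 ^ (n + 3)) (by positivity)
    (by
      have : 2 ^ (n + 3) = 4 * 2 ^ (n + 1) := by ring
      rw [this, pow_mul, h4, h.r18])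
    (by rw [h.r1]; exact Subgroup.mul_mem _ (Subgroup.mem_zpowers _) h3m)
    (by rw [h.s1]; exact Subgroup.pow_mem _ htm _)
    h.r8 h.r12 (comm_of _ _ h.r6) (comm_of _ _ h.r10) (comm_of _ _ h.r5) (comm_of _ _ h.r9)
    ⟨(f .t ^ (γ * 2 ^ n))⁻¹, Subgroup.inv_mem _ (Subgroup.pow_mem _ htm _), by
      have hh : f .g5 * f .g4 = f .g4 * f .g5 * f .t ^ (γ * 2 ^ n) := by
        rw [mul_assoc, ← h.s3]; group
      rw [hh]; group⟩
    (by
      rw [eq_top_iff, ← hgen, Subgroup.closure_le]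
      have hz : Subgroup.zpowers (f .g2) ≤ Subgroup.closure {f .g1, f .g2, f .g4, f .g5} := by
        rw [Subgroup.zpowers_le]
        exact Subgroup.subset_closure (by simp)
      rintro _ ⟨x, rfl⟩
      cases x
      · exact Subgroup.subset_closure (by simp)
      · exact Subgroup.subset_closure (by simp)
      · exact hz h3m
      · exact Subgroup.subset_closure (by simp)
      · exact Subgroup.subset_closure (by simp)
      · exact hz htm)
  refine ⟨this.1, this.2.trans (le_of_eq ?_)⟩
  ring

theorem iso_of_KRel {n α β γ : ℕ} {G : Type*} [Group G] [Finite G]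
    (hcard : Nat.card G = 2 ^ (n + 6)) (rels : Set (FreeGroup KGen))
    (hrels : ∀ (f : KGen → PresentedGroup rels),
      (∀ r ∈ rels, FreeGroup.lift f r = 1) → KRel n α β γ f)
    (hrels' : ∀ (f : KGen → G), KRel n α β γ f → (∀ r ∈ rels, FreeGroup.lift f r = 1))
    (f : KGen → G) (hf : KRel n α β γ f) (hgen : Subgroup.closure (Set.range f) = ⊤) :
    Nonempty (G ≃* PresentedGroup rels) := by
  have h1 : KRel n α β γ (PresentedGroup.of (rels := rels)) := by
    apply hrels
    intro r hr
    have : FreeGroup.lift (PresentedGroup.of (rels := rels)) = PresentedGroup.mk rels := by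
      ext x; simp [PresentedGroup.of]
    rw [this]
    exact PresentedGroup.one_of_mem hr
  obtain ⟨hfin, hle⟩ := h1.card_bound (PresentedGroup.closure_range_of rels)
  let F := PresentedGroup.toGroup (hrels' f hf)
  have hsurj : Function.Surjective F := by
    rw [← MonoidHom.range_eq_top, eq_top_iff, ← hgen, Subgroup.closure_le]
    rintro _ ⟨x, rfl⟩
    exact ⟨PresentedGroup.of x, PresentedGroup.toGroup.of _⟩
  have hbij : Function.Bijective F := hsurj.bijective_of_nat_card_le (by rw [hcard]; exact hle)
  exact ⟨(MulEquiv.ofBijective F hbij).symm⟩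

/-- `G` satisfies one of the six presentations. -/
def KConcl (G : Type*) [Group G] (n : ℕ) : Prop :=
  Nonempty (G ≃* K1 n) ∨ Nonempty (G ≃* K2 n) ∨
      Nonempty (G ≃* K3 n) ∨ Nonempty (G ≃* K4 n) ∨
      Nonempty (G ≃* K5 n) ∨ Nonempty (G ≃* K6 n)

theorem KConcl_of {n : ℕ} {α β γ : ℕ} {G : Type*} [Group G] [Finite G]
    (hcard : Nat.card G = 2 ^ (n + 6))
    (f : KGen → G) (hf : KRel n α β γ f) (hgen : Subgroup.closure (Set.range f) = ⊤)
    (hα : α ≤ 1) (hβ : β ≤ 1) (hγ : γ ≤ 1) (hαβ : α = 0 ∨ β = 0) : KConcl G n := by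
  have key : ∀ U V W : FreeGroup KGen,
    (∀ (H : Type _) [Group H] (f : KGen → H), 
      FreeGroup.lift f U = 1 ↔ f .g1 ^ 2 = f .t ^ (α * 2 ^ n)) → 
    (∀ (H : Type _) [Group H] (f : KGen → H), 
      FreeGroup.lift f V = 1 ↔ f .g2 ^ 2 = f .g3 * f .t ^ (1 + β * 2 ^ n)) → 
    (∀ (H : Type _) [Group H] (f : KGen → H), 
      FreeGroup.lift f W = 1 ↔ (f .g4)⁻¹ * f .g5 * f .g4 = f .g5 * f .t ^ (γ * 2 ^ n)) → 
    (∀ (H : Type _) [Group H] (f : KGen → H), 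
      FreeGroup.lift f U = 1 ↔ f .g1 ^ 2 = f .t ^ (α * 2 ^ n)) → 
    (∀ (H : Type _) [Group H] (f : KGen → H), 
      FreeGroup.lift f V = 1 ↔ f .g2 ^ 2 = f .g3 * f .t ^ (1 + β * 2 ^ n)) → 
    (∀ (H : Type _) [Group H] (f : KGen → H), 
      FreeGroup.lift f W = 1 ↔ (f .g4)⁻¹ * f .g5 * f .g4 = f .g5 * f .t ^ (γ * 2 ^ n)) → 
    Nonempty (G ≃* PresentedGroup (commonRels n ∪ {U, V, W})) := by
    intro U V W hU hV hW hU' hV' hW'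
    exact iso_of_KRel hcard _
      (fun f => (KRel_iff f (hU _ f) (hV _ f) (hW _ f)).1)
      (fun f => (KRel_iff f (hU' _ f) (hV' _ f) (hW' _ f)).2) f hf hgen
  have e : (α = 0 ∧ β = 0 ∨ α = 0 ∧ β = 1 ∨ α = 1 ∧ β = 0) ∧ (γ = 0 ∨ γ = 1) := by omega
  unfold KConcl
  obtain ⟨⟨rfl, rfl⟩ | ⟨rfl, rfl⟩ | ⟨rfl, rfl⟩, rfl | rfl⟩ := e
  · refine Or.inl (key _ _ _ ?_ ?_ ?_ ?_ ?_ ?_) <;>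
    · intro H _ f; simp [cnj, a1, a2, a3, a4, a5, tt, mul_inv_eq_one, -mul_inv_rev]
  · refine Or.inr <| Or.inr <| Or.inr <| Or.inl (key _ _ _ ?_ ?_ ?_ ?_ ?_ ?_) <;>
    · intro H _ f; simp [cnj, a1, a2, a3, a4, a5, tt, mul_inv_eq_one, -mul_inv_rev]
  · refine Or.inr <| Or.inl (key _ _ _ ?_ ?_ ?_ ?_ ?_ ?_) <;>
    · intro H _ f; simp [cnj, a1, a2, a3, a4, a5, tt, mul_inv_eq_one, -mul_inv_rev]
  · refine Or.inr <| Or.inr <| Or.inr <| Or.inr <| Or.inl (key _ _ _ ?_ ?_ ?_ ?_ ?_ ?_) <;>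
    · intro H _ f; simp [cnj, a1, a2, a3, a4, a5, tt, mul_inv_eq_one, -mul_inv_rev]
  · refine Or.inr <| Or.inr <| Or.inl (key _ _ _ ?_ ?_ ?_ ?_ ?_ ?_) <;>
    · intro H _ f; simp [cnj, a1, a2, a3, a4, a5, tt, mul_inv_eq_one, -mul_inv_rev]
  · refine Or.inr <| Or.inr <| Or.inr <| Or.inr <| Or.inr (key _ _ _ ?_ ?_ ?_ ?_ ?_ ?_) <;>
    · intro H _ f; simp [cnj, a1, a2, a3, a4, a5, tt, mul_inv_eq_one, -mul_inv_rev]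

open KGen
/-! ## Groups with abelianization of order four -/

theorem commutator_le_of_abelian_index_two {M : Type*} [Group M] (A D : Subgroup M)
    (hA : ∀ a ∈ A, ∀ b ∈ A, a * b = b * a) (hi : A.index = 2) (s : M) (hs : s ∉ A)
    (hD : ∀ a ∈ A, s * a * s⁻¹ * a⁻¹ ∈ D) : commutator M ≤ D := by
  have hn : A.Normal := Subgroup.normal_of_index_eq_two hi
  have hcos : ∀ g : M, g ∉ A → ∃ a ∈ A, g = a * s := by
    intro g hg
    refine ⟨g * s⁻¹, ?_, by group⟩
    rw [Subgroup.mul_mem_iff_of_index_two hi]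
    simp [hg, hs]
  rw [commutator_def, Subgroup.commutator_le]
  intro g _ h _
  rw [commutatorElement_def]
  by_cases hg : g ∈ A <;> by_cases hh : h ∈ A
  · rw [hA g hg h hh]; simp
  · obtain ⟨b, hb, rfl⟩ := hcos h hh
    have h1 : s * g⁻¹ * s⁻¹ ∈ A := hn.conj_mem _ (A.inv_mem hg) s
    have : g * (b * s) * g⁻¹ * (b * s)⁻¹ = (s * g * s⁻¹ * g⁻¹)⁻¹ := by
      calc g * (b * s) * g⁻¹ * (b * s)⁻¹ = g * (b * (s * g⁻¹ * s⁻¹)) * b⁻¹ := by group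
        _ = g * ((s * g⁻¹ * s⁻¹) * b) * b⁻¹ := by rw [hA b hb _ h1]
        _ = _ := by group
    rw [this]
    exact D.inv_mem (hD g hg)
  · obtain ⟨b, hb, rfl⟩ := hcos g hg
    have h1 : s * h * s⁻¹ ∈ A := hn.conj_mem _ hh s
    have : (b * s) * h * (b * s)⁻¹ * h⁻¹ = s * h * s⁻¹ * h⁻¹ := by
      calc (b * s) * h * (b * s)⁻¹ * h⁻¹ = (b * (s * h * s⁻¹)) * b⁻¹ * h⁻¹ := by group
        _ = ((s * h * s⁻¹) * b) * b⁻¹ * h⁻¹ := by rw [hA b hb _ h1]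
        _ = _ := by group
    rw [this]
    exact hD h hh
  · obtain ⟨a, ha, rfl⟩ := hcos g hg
    obtain ⟨b, hb, rfl⟩ := hcos h hh
    have h1 : s * (b * a⁻¹) * s⁻¹ ∈ A := hn.conj_mem _ (A.mul_mem hb (A.inv_mem ha)) s
    have : (a * s) * (b * s) * (a * s)⁻¹ * (b * s)⁻¹
        = s * (b * a⁻¹) * s⁻¹ * (b * a⁻¹)⁻¹ := by
      calc (a * s) * (b * s) * (a * s)⁻¹ * (b * s)⁻¹
          = (a * (s * (b * a⁻¹) * s⁻¹)) * b⁻¹ := by group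
        _ = ((s * (b * a⁻¹) * s⁻¹) * a) * b⁻¹ := by rw [hA a ha _ h1]
        _ = _ := by group
    rw [this]
    exact hD _ (A.mul_mem hb (A.inv_mem ha))

theorem card_commutator_of_index {M : Type*} [Group M] [Finite M] {k : ℕ}
    (hcard : Nat.card M = 2 ^ (k + 2)) (hidx : (commutator M).index = 4) :
    Nat.card (commutator M) = 2 ^ k := by
  have := (commutator M).card_mul_index
  rw [hidx, hcard, pow_add] at this
  omega

theorem exists_central_involution {M : Type*} [Group M] [Finite M] {k : ℕ}
    (hcard : Nat.card M = 2 ^ k) (hne : commutator M ≠ ⊥) :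
    ∃ z ∈ commutator M, z ∈ Subgroup.center M ∧ orderOf z = 2 := by
  have hp : IsPGroup 2 M := IsPGroup.of_card hcard
  have hnil : Group.IsNilpotent M := hp.isNilpotent
  set c := Group.nilpotencyClass M with hc
  have hc2 : 2 ≤ c := by
    by_contra hlt
    apply hne
    rw [← Subgroup.top_lowerCentralSeries_one, Subgroup.lowerCentralSeries_eq_bot_iff_nilpotencyClass_le]
    omega
  set L := Subgroup.lowerCentralSeries (⊤ : Subgroup M) (c - 1) with hL
  have hLne : L ≠ ⊥ := by
    rw [hL, Ne, Subgroup.lowerCentralSeries_eq_bot_iff_nilpotencyClass_le]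
    omega
  have hLc : L ≤ Subgroup.center M := by
    rw [← Subgroup.commutator_top_right_eq_bot_iff_le_center, hL,
      ← Subgroup.lowerCentralSeries_succ, Subgroup.lowerCentralSeries_eq_bot_iff_nilpotencyClass_le]
    omega
  have hLd : L ≤ commutator M := by
    rw [← Subgroup.top_lowerCentralSeries_one]
    exact Subgroup.lowerCentralSeries_antitone _ (by omega)
  have hdvd : 2 ∣ Nat.card L := by
    have hLp : IsPGroup 2 L := hp.to_subgroup L
    obtain ⟨j, hj⟩ := IsPGroup.iff_card.mp hLp
    rw [hj]
    apply dvd_pow_self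
    rintro rfl
    exact hLne (Subgroup.card_eq_one.mp (by simpa using hj))
  have : Fact (Nat.Prime 2) := ⟨Nat.prime_two⟩
  obtain ⟨z, hz⟩ := exists_prime_orderOf_dvd_card' 2 hdvd
  exact ⟨z, hLd z.2, hLc z.2, by rw [Subgroup.orderOf_coe]; exact hz⟩

theorem odd_exponent {M : Type*} [Group M] {r x : M} {k : ℕ} {e : ℤ}
    (hr : orderOf r = 2 ^ (k + 1)) (hx : x * r * x⁻¹ = r ^ e) : Odd e := by
  by_contra he
  rw [Int.not_odd_iff_even] at he
  obtain ⟨f, rfl⟩ := he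
  have h1 : (x * r * x⁻¹) ^ 2 ^ k = 1 := by
    rw [hx, ← zpow_natCast, ← zpow_mul, ← orderOf_dvd_iff_zpow_eq_one, hr]
    exact ⟨f, by push_cast; ring⟩
  rw [conj_pow] at h1
  have h2 : r ^ 2 ^ k = 1 := by simpa using h1
  have h3 := orderOf_dvd_of_pow_eq_one h2
  rw [hr, Nat.pow_dvd_pow_iff_le_right (by norm_num)] at h3
  omega

theorem index_zpowers_two {M : Type*} [Group M] [Finite M] {r : M} {k : ℕ}
    (hcard : Nat.card M = 2 ^ (k + 1)) (hr : orderOf r = 2 ^ k) :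
    (Subgroup.zpowers r).index = 2 := by
  have := (Subgroup.zpowers r).card_mul_index
  rw [Nat.card_zpowers, hr, hcard, pow_succ] at this
  exact Nat.eq_of_mul_eq_mul_left (by positivity) this

theorem exists_cyclic_index_two (k : ℕ) : ∀ (M : Type*) [Group M] [Finite M],
    Nat.card M = 2 ^ (k + 3) → (commutator M).index = 4 → ∃ r : M, orderOf r = 2 ^ (k + 2) := by
  induction k with
  | zero =>
    intro M _ _ hcard hidx
    by_contra hno
    push Not at hno
    have h2 : ∀ g : M, g ^ 2 = 1 := by
      intro g
      obtain ⟨j, hj, hj'⟩ := (Nat.dvd_prime_pow Nat.prime_two).mp (hcard ▸ orderOf_dvd_natCard g)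
      have h1 := hno g
      have h3 := hno (g ^ 2)
      rw [← orderOf_dvd_iff_pow_eq_one]
      interval_cases j
      · simp [hj']
      · simp [hj']
      · exact absurd hj' h1
      · exfalso
        apply h3
        rw [orderOf_pow, hj']
        norm_num
    have hab : commutator M = ⊥ := by
      rw [eq_bot_iff, commutator_def, Subgroup.commutator_le]
      intro g _ h _
      rw [Subgroup.mem_bot, commutatorElement_eq_one_iff_mul_comm]
      have e1 := h2 (g * h)
      have hg : g⁻¹ = g := inv_eq_of_mul_eq_one_left (by rw [← pow_two, h2])
      have hh : h⁻¹ = h := inv_eq_of_mul_eq_one_left (by rw [← pow_two, h2])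
      have hgh : (g * h)⁻¹ = g * h := inv_eq_of_mul_eq_one_left (by rw [← pow_two, h2])
      rw [← hgh, mul_inv_rev, hg, hh]
    have := card_commutator_of_index (k := 1) hcard hidx
    rw [hab] at this
    simp at this
  | succ k ih =>
    intro M _ _ hcard hidx
    have hcc : Nat.card (commutator M) = 2 ^ (k + 2) := card_commutator_of_index hcard hidx
    have hne : commutator M ≠ ⊥ := by
      intro h
      rw [h, Subgroup.card_bot] at hcc
      have : 2 ^ (k + 2) = 2 ^ k * 4 := by ring
      have : 0 < 2 ^ k := by positivity
      omega
    obtain ⟨z, hzd, hzc, hz2⟩ := exists_central_involution hcard hne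
    have hzcomm : ∀ g, g * z = z * g := fun g => (Subgroup.mem_center_iff.mp hzc g)
    set Z := Subgroup.zpowers z with hZ
    have hZc : Z ≤ Subgroup.center M := by rw [hZ, Subgroup.zpowers_le]; exact hzc
    have hZn : Z.Normal := ⟨fun n hn g => by rw [Subgroup.mem_center_iff.mp (hZc hn) g]; simpa using hn⟩
    have hZd : Z ≤ commutator M := by rw [hZ, Subgroup.zpowers_le]; exact hzd
    have hZcard : Nat.card Z = 2 := by rw [hZ, Nat.card_zpowers, hz2]
    have hZsq : ∀ w ∈ Z, w ^ 2 = 1 := by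
      rintro _ ⟨i, rfl⟩
      simp only
      rw [← zpow_natCast, ← zpow_mul, mul_comm, zpow_mul, zpow_natCast, ← hz2, pow_orderOf_eq_one,
        one_zpow]
    have hcardQ : Nat.card (M ⧸ Z) = 2 ^ (k + 3) := by
      have := Subgroup.card_eq_card_quotient_mul_card_subgroup Z
      rw [hcard, hZcard] at this
      have e : 2 ^ (k + 1 + 3) = 2 ^ (k + 3) * 2 := by ring
      omega
    have hidxQ : (commutator (M ⧸ Z)).index = 4 := by
      have : commutator (M ⧸ Z) = (commutator M).map (QuotientGroup.mk' Z) := by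
        rw [commutator_def, commutator_def, Subgroup.map_commutator,
          ← MonoidHom.range_eq_map, QuotientGroup.range_mk']
      rw [this, Subgroup.index_map_eq _ (QuotientGroup.mk'_surjective Z) (by simpa using hZd), hidx]
    obtain ⟨rb, hrb⟩ := ih (M ⧸ Z) hcardQ hidxQ
    obtain ⟨r, rfl⟩ := QuotientGroup.mk_surjective rb
    have hrZ : r ^ 2 ^ (k + 2) ∈ Z := by
      rw [← QuotientGroup.eq_one_iff, QuotientGroup.mk_pow, ← hrb, pow_orderOf_eq_one]
    have : Fact (Nat.Prime 2) := ⟨Nat.prime_two⟩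
    by_cases hr1 : r ^ 2 ^ (k + 2) = 1
    swap
    · refine ⟨r, orderOf_eq_prime_pow hr1 ?_⟩
      rw [pow_succ, pow_mul]
      exact hZsq _ hrZ
    exfalso
    set A := (Subgroup.zpowers (r : M ⧸ Z)).comap (QuotientGroup.mk' Z) with hAdef
    have hQi : (Subgroup.zpowers (r : M ⧸ Z)).index = 2 := index_zpowers_two hcardQ hrb
    have hAi : A.index = 2 := by
      rw [hAdef, Subgroup.index_comap_of_surjective _ (QuotientGroup.mk'_surjective Z), hQi]
    have hAn : A.Normal := Subgroup.normal_of_index_eq_two hAi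
    have hAmem : ∀ a ∈ A, ∃ i : ℤ, ∃ w ∈ Z, a = r ^ i * w := by
      intro a ha
      rw [hAdef, Subgroup.mem_comap] at ha
      obtain ⟨i, hi⟩ := ha
      refine ⟨i, (r ^ i)⁻¹ * a, ?_, by group⟩
      rw [← QuotientGroup.eq, QuotientGroup.mk_zpow]
      exact hi
    have hrA : r ∈ A := by
      rw [hAdef, Subgroup.mem_comap]; exact Subgroup.mem_zpowers _
    have hwc : ∀ w ∈ Z, ∀ g, g * w = w * g := fun w hw g => Subgroup.mem_center_iff.mp (hZc hw) g
    have hAab : ∀ a ∈ A, ∀ b ∈ A, a * b = b * a := by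
      intro a ha b hb
      obtain ⟨i, w, hw, rfl⟩ := hAmem a ha
      obtain ⟨j, v, hv, rfl⟩ := hAmem b hb
      have h1 : Commute w (r ^ j * v) := (hwc w hw _).symm
      have h2 : Commute (r ^ i) v := hwc v hv _
      have h3 : Commute (r ^ i) (r ^ j) := (Commute.refl r).zpow_zpow i j
      exact ((h3.mul_right h2).mul_left h1).eq
    obtain ⟨s, hs⟩ : ∃ s, s ∉ A := by
      by_contra h
      push Not at h
      have : A = ⊤ := (Subgroup.eq_top_iff' A).mpr h
      rw [this, Subgroup.index_top] at hAi
      omega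
    obtain ⟨e, w, hw, hew⟩ := hAmem _ (hAn.conj_mem r hrA s)
    have hodd : Odd e := by
      apply odd_exponent (k := k + 1) (r := (r : M ⧸ Z)) (x := (s : M ⧸ Z)) hrb
      rw [← QuotientGroup.mk_inv, ← QuotientGroup.mk_mul, ← QuotientGroup.mk_mul, hew,
        ← QuotientGroup.mk_zpow, QuotientGroup.mk_mul, (QuotientGroup.eq_one_iff w).mpr hw, mul_one]
    set d := s * r * s⁻¹ * r⁻¹ with hd
    have hdA : d ∈ A := A.mul_mem (hAn.conj_mem r hrA s) (A.inv_mem hrA)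
    have hd1 : d = r ^ (e - 1) * w := by
      rw [hd, hew, mul_assoc, ← hwc w hw, ← mul_assoc, zpow_sub_one]
    have hle : commutator M ≤ Subgroup.zpowers d := by
      apply commutator_le_of_abelian_index_two A _ hAab hAi s hs
      intro a ha
      obtain ⟨i, v, hv, rfl⟩ := hAmem a ha
      have hcomm : Commute d r := hAab d hdA r hrA
      have e1 : s * (r ^ i * v) * s⁻¹ * (r ^ i * v)⁻¹ = d ^ i := by
        calc s * (r ^ i * v) * s⁻¹ * (r ^ i * v)⁻¹
            = s * r ^ i * (v * s⁻¹) * (r ^ i * v)⁻¹ := by group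
          _ = s * r ^ i * (s⁻¹ * v) * (r ^ i * v)⁻¹ := by rw [← hwc v hv]
          _ = (s * r ^ i * s⁻¹) * (r ^ i)⁻¹ := by group
          _ = (s * r * s⁻¹) ^ i * (r ^ i)⁻¹ := by rw [conj_zpow]
          _ = (d * r) ^ i * (r ^ i)⁻¹ := by rw [hd]; group
          _ = d ^ i := by rw [hcomm.mul_zpow]; group
      rw [e1]
      exact Subgroup.zpow_mem _ (Subgroup.mem_zpowers _) _
    have hd2 : d ^ 2 ^ (k + 1) = 1 := by
      have hc1 : Commute (r ^ (e - 1)) w := hwc w hw _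
      rw [hd1, hc1.mul_pow]
      have h1 : w ^ 2 ^ (k + 1) = 1 := by
        rw [pow_succ', pow_mul, hZsq w hw, one_pow]
      obtain ⟨f, hf⟩ := hodd
      have h2 : (r ^ (e - 1)) ^ 2 ^ (k + 1) = 1 := by
        have e2 : (e - 1) * ((2 ^ (k + 1) : ℕ) : ℤ) = ((2 ^ (k + 2) : ℕ) : ℤ) * f := by
          rw [hf]; push_cast; ring
        rw [← zpow_natCast, ← zpow_mul, e2, zpow_mul, zpow_natCast, hr1, one_zpow]
      rw [h1, h2, one_mul]
    have h5 : Nat.card (commutator M) ≤ 2 ^ (k + 1) := by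
      calc Nat.card (commutator M) ≤ Nat.card (Subgroup.zpowers d) :=
            Nat.card_le_card_of_injective _ (Subgroup.inclusion_injective hle)
        _ ≤ 2 ^ (k + 1) := by
          rw [Nat.card_zpowers]
          exact orderOf_le_of_pow_eq_one (by positivity) hd2
    rw [hcc] at h5
    have := Nat.pow_lt_pow_right (a := 2) (by norm_num) (show k + 1 < k + 2 by omega)
    omega

/-- Classification of 2-groups with abelianization of order 4 -/
theorem max_class_structure {k : ℕ} (M : Type*) [Group M] [Finite M]
    (hcard : Nat.card M = 2 ^ (k + 3)) (hidx : (commutator M).index = 4) :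
    ∃ r s : M, orderOf r = 2 ^ (k + 2) ∧ s ∉ Subgroup.zpowers r ∧
      (Subgroup.zpowers r).index = 2 ∧
      (s⁻¹ * r * s = r⁻¹ ∨ s⁻¹ * r * s = r⁻¹ * r ^ 2 ^ (k + 1)) ∧
      (s ^ 2 = 1 ∨ s ^ 2 = r ^ 2 ^ (k + 1)) := by
  obtain ⟨r, hr⟩ := exists_cyclic_index_two k M hcard hidx
  have hi := index_zpowers_two hcard hr
  have hn : (Subgroup.zpowers r).Normal := Subgroup.normal_of_index_eq_two hi
  obtain ⟨s, hs⟩ : ∃ s, s ∉ Subgroup.zpowers r := by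
    by_contra h
    push Not at h
    have : Subgroup.zpowers r = ⊤ := (Subgroup.eq_top_iff' _).mpr h
    rw [this, Subgroup.index_top] at hi
    omega
  refine ⟨r, s, hr, hs, hi, ?_⟩
  obtain ⟨e, he⟩ : s⁻¹ * r * s ∈ Subgroup.zpowers r := by
    have := hn.conj_mem r (Subgroup.mem_zpowers r) s⁻¹
    rwa [inv_inv] at this
  simp only at he
  have hodd : Odd e := odd_exponent (x := s⁻¹) (k := k + 1) hr (by rw [inv_inv, he])
  have hconj : ∀ i : ℤ, s⁻¹ * r ^ i * s = r ^ (e * i) := by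
    intro i
    have := conj_zpow (i := i) (a := s⁻¹) (b := r)
    rw [inv_inv] at this
    rw [← this, ← he, zpow_mul]
  have hle : commutator M ≤ Subgroup.zpowers (r ^ (e - 1)) := by
    apply commutator_le_of_abelian_index_two (Subgroup.zpowers r) _ ?_ hi s⁻¹ (by simpa using hs)
    · rintro _ ⟨i, rfl⟩
      simp only
      rw [inv_inv, hconj, ← zpow_neg, ← zpow_add]
      have : e * i + -i = (e - 1) * i := by ring
      rw [this, zpow_mul]
      exact Subgroup.zpow_mem _ (Subgroup.mem_zpowers _) _
    · rintro _ ⟨i, rfl⟩ _ ⟨j, rfl⟩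
      exact ((Commute.refl r).zpow_zpow i j).eq
  obtain ⟨f, hf⟩ := hodd
  have hfodd : Odd f := by
    by_contra h
    rw [Int.not_odd_iff_even] at h
    obtain ⟨g, hg⟩ := h
    have h1 : (r ^ (e - 1)) ^ 2 ^ k = 1 := by
      rw [← zpow_natCast, ← zpow_mul, ← orderOf_dvd_iff_zpow_eq_one, hr]
      exact ⟨g, by rw [hf, hg]; push_cast; ring⟩
    have hcc : Nat.card (commutator M) = 2 ^ (k + 1) := card_commutator_of_index hcard hidx
    have h5 : Nat.card (commutator M) ≤ 2 ^ k := by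
      calc Nat.card (commutator M) ≤ Nat.card (Subgroup.zpowers (r ^ (e - 1))) :=
            Nat.card_le_card_of_injective _ (Subgroup.inclusion_injective hle)
        _ ≤ 2 ^ k := by
          rw [Nat.card_zpowers]
          exact orderOf_le_of_pow_eq_one (by positivity) h1
    rw [hcc] at h5
    have := Nat.pow_lt_pow_right (a := 2) (by norm_num) (show k < k + 1 by omega)
    omega
  have hcop : IsCoprime ((2 : ℤ) ^ (k + 1)) f := by
    apply IsCoprime.pow_left
    rw [Int.isCoprime_iff_gcd_eq_one, Int.gcd_comm]
    exact Int.isCoprime_iff_gcd_eq_one.mp (Int.isCoprime_two_right.mpr hfodd)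
  have hdiv : ∀ x : ℤ, r ^ ((e - 1) * x) = 1 → (2 : ℤ) ^ (k + 1) ∣ x := by
    intro x hx
    rw [← orderOf_dvd_iff_zpow_eq_one, hr, hf] at hx
    obtain ⟨y, hy⟩ := hx
    apply hcop.dvd_of_dvd_mul_left
    refine ⟨y, ?_⟩
    have : (2 : ℤ) * (f * x) = 2 * (2 ^ (k + 1) * y) := by
      push_cast at hy
      linear_combination hy
    linarith
  have hz2 : (r ^ 2 ^ (k + 1)) ^ 2 = 1 := by
    rw [← pow_mul, ← pow_succ, ← hr, pow_orderOf_eq_one]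
  have hpar : ∀ g : ℤ, r ^ ((2 : ℤ) ^ (k + 1) * g) = 1 ∨
      r ^ ((2 : ℤ) ^ (k + 1) * g) = r ^ 2 ^ (k + 1) := by
    intro g
    have e1 : r ^ ((2 : ℤ) ^ (k + 1) * g) = (r ^ 2 ^ (k + 1)) ^ g := by
      rw [zpow_mul]; congr 1
      rw [← zpow_natCast]; push_cast; rfl
    rw [e1]
    rcases Int.even_or_odd g with ⟨h, rfl⟩ | ⟨h, rfl⟩
    · left
      rw [← two_mul, zpow_mul, zpow_ofNat, hz2, one_zpow]
    · right
      rw [zpow_add, zpow_mul, zpow_ofNat, hz2, one_zpow, one_mul, zpow_one]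
  have hs2 : s ^ 2 ∈ Subgroup.zpowers r := Subgroup.sq_mem_of_index_two hi s
  obtain ⟨j, hj⟩ := hs2
  simp only at hj
  constructor
  · have h1 : r ^ ((e - 1) * (e + 1)) = 1 := by
      have h2 : s⁻¹ * (s⁻¹ * r * s) * s = r := by
        calc s⁻¹ * (s⁻¹ * r * s) * s = (s ^ 2)⁻¹ * r * s ^ 2 := by
              simp only [pow_two, mul_inv_rev, mul_assoc]
          _ = r := by rw [← hj]; group
      rw [← he, hconj] at h2
      have : (e - 1) * (e + 1) = e * e - 1 := by ring
      rw [this, zpow_sub_one, h2, mul_inv_cancel]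
    obtain ⟨g, hg⟩ := hdiv _ h1
    have h3 : s⁻¹ * r * s = r⁻¹ * r ^ ((2 : ℤ) ^ (k + 1) * g) := by
      rw [← hg, ← he, ← zpow_neg_one, ← zpow_add]; congr 1; ring
    rcases hpar g with h | h
    · left; rw [h3, h, mul_one]
    · right; rw [h3, h]
  · have h1 : r ^ ((e - 1) * j) = 1 := by
      have h2 : s⁻¹ * r ^ j * s = r ^ j := by rw [hj]; group
      rw [hconj] at h2
      rw [sub_mul, zpow_sub, h2, one_mul, mul_inv_cancel]
    obtain ⟨g, hg⟩ := hdiv _ h1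
    rw [← hj, hg]
    exact hpar g

open KGen
/-! ## End game: recognizing the groups -/

theorem sc_conj {M : Type*} [Group M] {a x y : M} (h : SemiconjBy a x y) : a⁻¹ * y * a = x := by
  rw [mul_assoc, ← h.eq, inv_mul_cancel_left]

theorem commute_conj {M : Type*} [Group M] {a x : M} (h : Commute a x) : a⁻¹ * x * a = x :=
  sc_conj h

theorem endgame_core {G : Type*} [Group G] [Finite G] {n α β γ : ℕ}
    (hcard : Nat.card G = 2 ^ (n + 6)) (g1 r g4 g5 : G)
    (hr : r ^ (8 * 2 ^ n) = 1)
    (h1 : g1⁻¹ * r * g1 = r⁻¹ * r ^ (4 * β * 2 ^ n))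
    (h2 : g1 ^ 2 = r ^ (4 * α * 2 ^ n))
    (h41 : Commute g4 g1) (h4r : Commute g4 r) (h51 : Commute g5 g1) (h5r : Commute g5 r)
    (h4 : g4 ^ 2 = 1) (h5 : g5 ^ 2 = 1) (h45 : g4⁻¹ * g5 * g4 = g5 * r ^ (4 * γ * 2 ^ n))
    (hgen : ∀ H : Subgroup G, g1 ∈ H → r ∈ H → g4 ∈ H → g5 ∈ H → H = ⊤)
    (hα : α ≤ 1) (hβ : β ≤ 1) (hγ : γ ≤ 1) (hαβ : α = 0 ∨ β = 0) : KConcl G n := by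
  have hrz : r ^ ((8 * 2 ^ n : ℤ)) = 1 := by
    rw [← hr, ← zpow_natCast]; push_cast; rfl
  have key : ∀ (k : ℤ) {a b : ℤ}, a - b = 8 * 2 ^ n * k → r ^ a = r ^ b := by
    intro k a b h
    have : a = b + 8 * 2 ^ n * k := by linarith
    rw [this, zpow_add, zpow_mul, hrz, one_zpow, mul_one]
  have hsc : SemiconjBy g1 (r ^ ((4 * β * 2 ^ n - 1 : ℤ))) r := by
    have : r ^ ((4 * β * 2 ^ n - 1 : ℤ)) = r⁻¹ * r ^ (4 * β * 2 ^ n) := by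
      rw [← zpow_natCast, ← zpow_neg_one, ← zpow_add]; exact key 0 (by push_cast; ring)
    rw [this, ← h1]
    unfold SemiconjBy; group
  have hsck : ∀ k : ℤ, SemiconjBy g1 (r ^ ((4 * β * 2 ^ n - 1 : ℤ) * k)) (r ^ k) := by
    intro k; rw [zpow_mul]; exact hsc.zpow_right k
  have htp : ∀ k : ℕ, (r ^ (4 : ℤ)) ^ k = r ^ (4 * k : ℤ) := by
    intro k; rw [zpow_mul, zpow_natCast]
  refine KConcl_of (α := α) (β := β) (γ := γ) hcard (fun i => match i with
    | .g1 => g1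
    | .g2 => r
    | .g3 => r ^ ((4 * β * 2 ^ n - 2 : ℤ))
    | .g4 => g4
    | .g5 => g5
    | .t => r ^ (4 : ℤ)) ?_ ?_ hα hβ hγ hαβ
  · have hrr : ∀ a b : ℤ, Commute (r ^ a) (r ^ b) := fun a b => (Commute.refl r).zpow_zpow a b
    have hr1 : ∀ b : ℤ, Commute r (r ^ b) := fun b => (Commute.refl r).zpow_right b
    constructor <;> dsimp only
    · rw [sc_conj hsc, ← zpow_one_add]; congr 1; ring
    · rw [sc_conj (hsck _), ← zpow_add]
      exact key (2 * β ^ 2 * 2 ^ n - 2 * β) (by ring)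
    · exact commute_conj (hr1 _)
    · rw [← zpow_natCast, ← zpow_mul, ← zpow_neg]
      exact key β (by push_cast; ring)
    · exact commute_conj h41.symm
    · exact commute_conj h4r.symm
    · exact commute_conj (h4r.zpow_right _).symm
    · exact h4
    · exact commute_conj h51.symm
    · exact commute_conj h5r.symm
    · exact commute_conj (h5r.zpow_right _).symm
    · exact h5
    · rw [sc_conj (hsck _), ← zpow_neg]
      exact key (2 * β) (by ring)
    · exact commute_conj (hr1 _)
    · exact commute_conj (hrr _ _)
    · exact commute_conj (h4r.zpow_right _)
    · exact commute_conj (h5r.zpow_right _)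
    · rw [htp, ← zpow_zero r]
      exact key 1 (by push_cast; ring)
    · rw [h2, htp, ← zpow_natCast]
      exact key 0 (by push_cast; ring)
    · rw [htp, ← zpow_natCast, ← zpow_add]
      exact key (-β) (by push_cast; ring)
    · rw [h45, htp, ← zpow_natCast]
      congr 1
      exact key 0 (by push_cast; ring)
  · apply hgen
    · exact Subgroup.subset_closure ⟨.g1, rfl⟩
    · exact Subgroup.subset_closure ⟨.g2, rfl⟩
    · exact Subgroup.subset_closure ⟨.g4, rfl⟩
    · exact Subgroup.subset_closure ⟨.g5, rfl⟩

/-- The final recognition step: a central product of a maximal class group `⟨r, s⟩`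
with `⟨x, y⟩`. -/
theorem endgame {G : Type*} [Group G] [Finite G] {n : ℕ}
    (hcard : Nat.card G = 2 ^ (n + 6)) (r s x y κ : G)
    (hr : r ^ (8 * 2 ^ n) = 1)
    (h1 : s⁻¹ * r * s = r⁻¹ ∨ s⁻¹ * r * s = r⁻¹ * r ^ (4 * 2 ^ n))
    (h2 : s ^ 2 = 1 ∨ s ^ 2 = r ^ (4 * 2 ^ n))
    (hxs : Commute x s) (hxr : Commute x r) (hys : Commute y s) (hyr : Commute y r)
    (hx : x ^ 2 = κ) (hy : y ^ 2 = κ) (hyx : y * x = κ * (x * y))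
    (hκ : κ = 1 ∨ κ = r ^ (4 * 2 ^ n))
    (hgen : ∀ H : Subgroup G, s ∈ H → r ∈ H → x ∈ H → y ∈ H → H = ⊤) : KConcl G n := by
  set z := r ^ (4 * 2 ^ n) with hz
  have hz2 : z * z = 1 := by rw [hz, ← pow_add, ← hr]; congr 1; ring
  have hzr : Commute z r := (Commute.refl r).pow_left _
  have hxz : Commute x z := hxr.pow_right _
  have hyz : Commute y z := hyr.pow_right _
  have hzs : Commute s z := by
    have hpow : ∀ k : ℕ, s⁻¹ * r ^ k * s = (s⁻¹ * r * s) ^ k := by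
      intro k
      have := conj_pow (i := k) (a := s⁻¹) (b := r)
      rw [inv_inv] at this
      exact this.symm
    have hzi : z⁻¹ = z := inv_eq_of_mul_eq_one_left hz2
    have : s⁻¹ * z * s = z := by
      rw [hz, hpow, ← hz]
      rcases h1 with h | h
      · rw [h, inv_pow, ← hz, hzi]
      · rw [h, ((Commute.refl r).inv_left.pow_right _).mul_pow, inv_pow, ← hz, hzi,
          mul_comm 4, pow_mul z]
        have : z ^ 2 ^ n * z ^ 2 ^ n = 1 := by rw [← (Commute.refl z).mul_pow, hz2, one_pow]
        have : (z ^ 2 ^ n) ^ 4 = 1 := by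
          rw [show 4 = 2 + 2 from rfl, pow_add, pow_two, this, one_mul]
        rw [this, mul_one]
    have h3 : s * (s⁻¹ * z * s) = s * z := by rw [this]
    rw [mul_assoc, mul_inv_cancel_left] at h3
    exact h3.symm
  -- normalise `s` in the semidihedral case
  have hnorm : ∀ b : ℕ, b ≤ 1 → ∃ s' : G, ∃ a β : ℕ, a ≤ 1 ∧ β ≤ 1 ∧
      s'⁻¹ * r * s' = r⁻¹ * z ^ β ∧ s' ^ 2 = z ^ a ∧ (a = b ∨ β = 0) ∧
      Commute x s' ∧ Commute y s' ∧ Commute s' z ∧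
      (∀ H : Subgroup G, s' ∈ H → r ∈ H → s ∈ H) := by
    intro b hb
    have h2' : ∃ a : ℕ, a ≤ 1 ∧ s ^ 2 = z ^ a := by
      rcases h2 with h | h
      · exact ⟨0, by omega, by simpa using h⟩
      · exact ⟨1, by omega, by simpa using h⟩
    obtain ⟨a, ha, hsa⟩ := h2'
    rcases h1 with h | h
    · exact ⟨s, a, 0, ha, by omega, by simpa using h, hsa, Or.inr rfl, hxs, hys, hzs,
        fun H h _ => h⟩
    · by_cases hab : a = b
      · exact ⟨s, a, 1, ha, by omega, by simpa using h, hsa, Or.inl hab, hxs, hys, hzs,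
          fun H h _ => h⟩
      · refine ⟨s * r, b, 1, hb, by omega, ?_, ?_, Or.inl rfl, hxs.mul_right hxr,
          hys.mul_right hyr, hzs.mul_left hzr.symm, ?_⟩
        · calc (s * r)⁻¹ * r * (s * r) = r⁻¹ * (s⁻¹ * r * s) * r := by group
            _ = r⁻¹ * (r⁻¹ * (z * r)) := by rw [h]; group
            _ = r⁻¹ * z ^ 1 := by rw [hzr.eq]; group
        · have h3 : (s * r) ^ 2 = z ^ (a + 1) := by
            calc (s * r) ^ 2 = s ^ 2 * (s⁻¹ * r * s) * r := by simp only [pow_two]; group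
              _ = z ^ a * (r⁻¹ * (z * r)) := by rw [h, hsa]; group
              _ = z ^ (a + 1) := by rw [hzr.eq, pow_succ]; group
          rw [h3]
          have : a = 0 ∧ b = 1 ∨ a = 1 ∧ b = 0 := by omega
          rcases this with ⟨rfl, rfl⟩ | ⟨rfl, rfl⟩
          · rfl
          · rw [pow_succ, pow_one, hz2, pow_zero]
        · intro H hs hr
          have := H.mul_mem hs (H.inv_mem hr)
          simpa using this
  have hzp : ∀ a : ℕ, z ^ a = r ^ (4 * a * 2 ^ n) := by
    intro a; rw [hz, ← pow_mul]; congr 1; ring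
  by_cases hκ1 : κ = 1
  · obtain ⟨s', a, β, ha, hβ, e1, e2, hab, c1, c2, -, hg⟩ := hnorm 0 (by omega)
    refine endgame_core (α := a) (β := β) (γ := 0) hcard s' r x y hr ?_ ?_ c1 hxr c2 hyr
      ?_ ?_ ?_ ?_ ha hβ (by omega) hab
    · rw [e1, hzp]
    · rw [e2, hzp]
    · rw [hx, hκ1]
    · rw [hy, hκ1]
    · rw [mul_assoc, hyx, hκ1]; simp
    · intro H h3 h4 h5 h6
      exact hgen H (hg H h3 h4) h4 h5 h6
  · have hκz : κ = z := by tauto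
    subst hκz
    clear hκ
    obtain ⟨s', a, β, ha, hβ, e1, e2, hab, c1, c2, c3, hg⟩ := hnorm 1 le_rfl
    set w := r ^ (2 * 2 ^ n) with hw
    have hww : w * w = z := by rw [hw, hz, ← pow_add]; congr 1; ring
    have hwr : Commute w r := (Commute.refl r).pow_left _
    have hxw : Commute x w := hxr.pow_right _
    have hyw : Commute y w := hyr.pow_right _
    have hwz : Commute w z := by rw [← hww]; exact (Commute.refl w).mul_right (Commute.refl w)
    have hws : s'⁻¹ * w * s' = w * z := by
      have hp : s'⁻¹ * w * s' = (s'⁻¹ * r * s') ^ (2 * 2 ^ n) := by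
        have := conj_pow (i := 2 * 2 ^ n) (a := s'⁻¹) (b := r)
        rw [inv_inv] at this
        exact this.symm
      have hzz : (z ^ β) ^ (2 * 2 ^ n) = 1 := by
        rw [← pow_mul, mul_comm, pow_mul, pow_mul z, pow_two, hz2, one_pow, one_pow]
      rw [hp, e1, (hzr.symm.inv_left.pow_right _).mul_pow, hzz, mul_one, inv_pow, ← hw]
      apply inv_eq_of_mul_eq_one_right
      rw [← mul_assoc, hww, hz2]
    have hws' : w * s' = s' * w * z := by
      calc w * s' = s' * (s'⁻¹ * w * s') := by group
        _ = s' * w * z := by rw [hws]; group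
    have hxx : x * x = z := by rw [← pow_two, hx]
    have hyy : y * y = z := by rw [← pow_two, hy]
    -- generators
    have cyw : Commute (y * w) (s' * x) := by
      show y * w * (s' * x) = s' * x * (y * w)
      calc y * w * (s' * x) = y * (w * s') * x := by group
        _ = (y * s') * w * z * x := by rw [hws']; group
        _ = s' * y * w * (x * z) := by rw [c2.eq, hxz.eq]; group
        _ = s' * y * (x * w) * z := by rw [hxw.eq]; group
        _ = s' * (y * x) * (w * z) := by group
        _ = s' * (z * (x * y)) * (z * w) := by rw [hyx, hwz.eq]
        _ = s' * (x * y) * (z * z) * w := by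
          rw [((hxz.mul_left hyz).symm).eq]; group
        _ = s' * x * (y * w) := by rw [hz2]; group
    have cxx : Commute x (s' * x) := c1.mul_right (Commute.refl x)
    have cxyz : Commute (x * y * w) (s' * x) := by
      rw [mul_assoc]; exact cxx.mul_left cyw
    refine endgame_core (α := 1 - a) (β := β) (γ := 1) hcard (s' * x) r (x * y * w) (y * w) hr
      ?_ ?_ cxyz ((hxr.mul_left hyr).mul_left hwr) cyw (hyr.mul_left hwr)
      ?_ ?_ ?_ ?_ (by omega) hβ (by omega) (by omega)
    · calc (s' * x)⁻¹ * r * (s' * x) = x⁻¹ * (s'⁻¹ * r * s') * x := by group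
        _ = s'⁻¹ * r * s' := by
          rw [e1]
          exact commute_conj ((hxr.inv_right).mul_right (hxz.pow_right _))
        _ = _ := by rw [e1, hzp]
    · rw [(c1.symm).mul_pow, e2, hx, ← hzp]
      have : a = 0 ∨ a = 1 := by omega
      rcases this with rfl | rfl
      · simp
      · simp [hz2]
    · rw [(hxw.mul_left hyw).mul_pow, pow_two w, hww]
      calc (x * y) ^ 2 * z = x * (y * x) * y * z := by simp only [pow_two]; group
        _ = x * z * x * (y * y) * z := by rw [hyx]; group
        _ = z * (x * x) * (y * y) * z := by rw [hxz.eq]; group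
        _ = 1 := by rw [hxx, hyy, mul_assoc, hz2, one_mul]
    · rw [hyw.mul_pow, hy, pow_two, hww, hz2]
    · rw [← hzp, pow_one]
      have h3 : y * w * (x * y * w) = x * y * w * (y * w * z) := by
        calc y * w * (x * y * w) = y * ((w * (x * y)) * w) := by group
          _ = (y * x) * y * w * w := by rw [((hxw.mul_left hyw).symm).eq]; group
          _ = z * (x * y) * y * w * w := by rw [hyx]
          _ = x * y * z * (y * w) * w := by rw [((hxz.mul_left hyz).symm).eq]; group
          _ = x * y * (z * w) * y * w := by rw [hyw.eq]; group
          _ = x * y * w * (z * (y * w)) := by rw [hwz.symm.eq]; group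
          _ = x * y * w * (y * w * z) := by rw [((hyz.mul_left hwz).symm).eq]
      rw [mul_assoc _ (y * w), h3]; group
    · intro H h3 h4 h5 h6
      have hxH : x ∈ H := by
        have := H.mul_mem h5 (H.inv_mem h6)
        have e : x * y * w * (y * w)⁻¹ = x := by group
        rwa [e] at this
      have hwH : w ∈ H := H.pow_mem h4 _
      have hyH : y ∈ H := by
        have := H.mul_mem h6 (H.inv_mem hwH)
        have e : y * w * w⁻¹ = y := by group
        rwa [e] at this
      have hsH : s' ∈ H := by
        have := H.mul_mem h3 (H.inv_mem hxH)
        have e : s' * x * x⁻¹ = s' := by group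
        rwa [e] at this
      exact hgen H (hg H hsH h4) h4 hxH hyH

open KGen
open scoped commutatorElement
/-! ## Coprime action -/

/-- `φ` is an automorphism of order dividing the odd prime `p` of the finite `2`-group `G`. -/
structure Cop {G : Type*} [Group G] (φ : G ≃* G) (p : ℕ) : Prop where
  card : ∃ m, Nat.card G = 2 ^ m
  prime : p.Prime
  odd : p ≠ 2
  iter : ∀ g, φ^[p] g = g

/-- `φ` leaves the subgroup `A` invariant. -/
def PhiInv {G : Type*} [Group G] (φ : G ≃* G) (A : Subgroup G) : Prop := ∀ a ∈ A, φ a ∈ A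

/-- Fixed points of `φ`. -/
def fixC {G : Type*} [Group G] (φ : G ≃* G) : Subgroup G where
  carrier := {g | φ g = g}
  mul_mem' := by
    intro a b ha hb
    simp only [Set.mem_ofPred_eq] at *
    rw [map_mul, ha, hb]
  one_mem' := by simp
  inv_mem' := by
    intro a ha
    simp only [Set.mem_ofPred_eq] at *
    rw [map_inv, ha]

theorem mem_fixC {G : Type*} [Group G] {φ : G ≃* G} {g : G} : g ∈ fixC φ ↔ φ g = g := Iff.rfl

/-- The subgroup `[A, φ]`. -/
def movQ {G : Type*} [Group G] (φ : G ≃* G) (A : Subgroup G) : Subgroup G :=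
  Subgroup.closure {v | ∃ u ∈ A, v = u⁻¹ * φ u}

theorem mem_movQ {G : Type*} [Group G] {φ : G ≃* G} {A : Subgroup G} {u : G} (hu : u ∈ A) :
    u⁻¹ * φ u ∈ movQ φ A := Subgroup.subset_closure ⟨u, hu, rfl⟩

theorem movQ_le {G : Type*} [Group G] {φ : G ≃* G} {A B : Subgroup G}
    (h : ∀ u ∈ A, u⁻¹ * φ u ∈ B) : movQ φ A ≤ B := by
  rw [movQ, Subgroup.closure_le]
  rintro _ ⟨u, hu, rfl⟩
  exact h u hu

theorem inv_movQ {G : Type*} [Group G] {φ : G ≃* G} {A : Subgroup G} (hA : PhiInv φ A) :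
    PhiInv φ (movQ φ A) := by
  intro a ha
  have : movQ φ A ≤ (movQ φ A).comap φ.toMonoidHom := by
    apply movQ_le
    intro u hu
    show φ (u⁻¹ * φ u) ∈ movQ φ A
    rw [map_mul, map_inv]
    exact mem_movQ (hA u hu)
  exact this ha

theorem inv_top {G : Type*} [Group G] (φ : G ≃* G) : PhiInv φ ⊤ := fun _ _ => Subgroup.mem_top _

theorem inv_fixC {G : Type*} [Group G] (φ : G ≃* G) : PhiInv φ (fixC φ) := by
  intro a ha
  rw [mem_fixC] at *
  rw [ha, ha]

instance normal_movQ_top {G : Type*} [Group G] (φ : G ≃* G) : (movQ φ ⊤).Normal := by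
  have key : ∀ h : G, movQ φ ⊤ ≤ (movQ φ ⊤).comap (MulAut.conj h⁻¹).toMonoidHom := by
    intro h
    apply movQ_le
    intro g _
    show h⁻¹ * (g⁻¹ * φ g) * h⁻¹⁻¹ ∈ movQ φ ⊤
    have e : h⁻¹ * (g⁻¹ * φ g) * h⁻¹⁻¹ = ((g * h)⁻¹ * φ (g * h)) * (h⁻¹ * φ h)⁻¹ := by
      rw [map_mul]; group
    rw [e]
    exact Subgroup.mul_mem _ (mem_movQ (Subgroup.mem_top _))
      (Subgroup.inv_mem _ (mem_movQ (Subgroup.mem_top _)))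
  constructor
  intro n hn g
  have h1 := key g⁻¹ hn
  have h2 : g⁻¹⁻¹ * n * g⁻¹⁻¹⁻¹ ∈ movQ φ ⊤ := h1
  simpa using h2

theorem fix_card {α : Type*} [Finite α] {p : ℕ} (hp : p.Prime) (f : α → α)
    (hf : ∀ x, f^[p] x = x) : Nat.card α ≡ Nat.card {x // f x = x} [MOD p] := by
  classical
  have := Fintype.ofFinite α
  have : Fact p.Prime := ⟨hp⟩
  have hf1 : (show Function.End α from f) ^ p ^ 1 = 1 := by
    rw [pow_one]
    have h : ∀ (n : ℕ) (x : α), ((show Function.End α from f) ^ n) x = f^[n] x := by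
      intro n
      induction n with
      | zero => intro x; rfl
      | succ n ih =>
        intro x
        rw [pow_succ, Function.iterate_succ_apply]
        exact ih (f x)
    funext x
    exact (h p x).trans (hf x)
  have := Equiv.Perm.card_fixedPoints_modEq hf1
  rw [← Nat.card_eq_fintype_card, ← Nat.card_eq_fintype_card] at this
  exact this

section
variable {G : Type*} [Group G] {φ : G ≃* G} {p : ℕ}

theorem iter_mul (φ : G ≃* G) (k : ℕ) (a b : G) : φ^[k] (a * b) = φ^[k] a * φ^[k] b := by
  induction k generalizing a b with
  | zero => rfl
  | succ k ih => rw [Function.iterate_succ_apply, map_mul, ih]; rfl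

/-- A coset on which `φ` acts contains a fixed point. -/
theorem Cop.exists_fixed [Finite G] (h : Cop φ p) {N : Subgroup G} (hN : PhiInv φ N) {g : G}
    (hg : g⁻¹ * φ g ∈ N) : ∃ c ∈ fixC φ, g⁻¹ * c ∈ N := by
  let f : {x : G // g⁻¹ * x ∈ N} → {x : G // g⁻¹ * x ∈ N} := fun x => ⟨φ x.1, by
    have h1 := N.mul_mem hg (hN _ x.2)
    have e : g⁻¹ * φ g * φ (g⁻¹ * x.1) = g⁻¹ * φ x.1 := by
      rw [map_mul, map_inv]; group
    rwa [e] at h1⟩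
  have hit : ∀ (k : ℕ) x, (f^[k] x).1 = φ^[k] x.1 := by
    intro k
    induction k with
    | zero => intro x; rfl
    | succ k ih => intro x; rw [Function.iterate_succ_apply, Function.iterate_succ_apply, ih]
  have hc := fix_card h.prime f (fun x => Subtype.ext (by rw [hit, h.iter]))
  have hcard : Nat.card {x : G // g⁻¹ * x ∈ N} = Nat.card N :=
    Nat.card_congr ⟨fun x => ⟨g⁻¹ * x.1, x.2⟩, fun x => ⟨g * x.1, by simp⟩,
      fun x => by simp, fun x => by simp⟩
  obtain ⟨m, hm⟩ := h.card
  have hdvd : Nat.card N ∣ 2 ^ m := hm ▸ Subgroup.card_subgroup_dvd_card N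
  have hnd : ¬ p ∣ Nat.card N := by
    intro hd
    have := h.prime.dvd_of_dvd_pow (hd.trans hdvd)
    exact h.odd ((Nat.prime_dvd_prime_iff_eq h.prime Nat.prime_two).mp this)
  have hne : Nat.card {x // f x = x} ≠ 0 := by
    intro h0
    rw [h0, hcard] at hc
    exact hnd (Nat.modEq_zero_iff_dvd.mp hc)
  obtain ⟨⟨x, hx⟩⟩ := (Nat.card_ne_zero.mp hne).1
  exact ⟨x.1, congrArg Subtype.val hx, x.2⟩

/-- Nontrivial action forces at least `p + 1` cosets. -/
theorem Cop.relIndex_ge [Finite G] (h : Cop φ p) {A B : Subgroup G} (hA : PhiInv φ A)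
    (hB : PhiInv φ B) {u : G} (hu : u ∈ A) (hn : u⁻¹ * φ u ∉ B) : p + 1 ≤ B.relIndex A := by
  let f : A ⧸ B.subgroupOf A → A ⧸ B.subgroupOf A :=
    Quotient.map' (fun a => ⟨φ a.1, hA _ a.2⟩) (by
      intro a b hab
      rw [QuotientGroup.leftRel_apply] at *
      have h1 : a.1⁻¹ * b.1 ∈ B := hab
      have h2 := hB _ h1
      rw [map_mul, map_inv] at h2
      exact h2)
  have hf : ∀ a : A, f (QuotientGroup.mk a) = QuotientGroup.mk ⟨φ a.1, hA _ a.2⟩ := fun a => rfl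
  have hAi : ∀ (k : ℕ), ∀ a ∈ A, φ^[k] a ∈ A := by
    intro k
    induction k with
    | zero => intro a ha; exact ha
    | succ k ih => intro a ha; rw [Function.iterate_succ_apply]; exact ih _ (hA _ ha)
  have hit : ∀ (k : ℕ) (a : A), f^[k] (QuotientGroup.mk a) = QuotientGroup.mk
      ⟨φ^[k] a.1, hAi k _ a.2⟩ := by
    intro k
    induction k with
    | zero => intro a; rfl
    | succ k ih => intro a; rw [Function.iterate_succ_apply, hf, ih]; rfl
  have hc := fix_card h.prime f (fun x => by
    induction x using QuotientGroup.induction_on with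
    | H a => rw [hit]; congr 1; exact Subtype.ext (h.iter _))
  have hone : f (QuotientGroup.mk 1) = QuotientGroup.mk 1 := by
    rw [hf]; congr 1; exact Subtype.ext (map_one φ)
  have hpos : 0 < Nat.card {x // f x = x} := by
    have : Nonempty {x // f x = x} := ⟨⟨_, hone⟩⟩
    exact Nat.card_pos
  have hlt : Nat.card {x // f x = x} < Nat.card (A ⧸ B.subgroupOf A) := by
    apply Finite.card_subtype_lt (x := QuotientGroup.mk ⟨u, hu⟩)
    intro hx
    rw [hf] at hx
    have := QuotientGroup.eq.mp hx.symm
    exact hn this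
  have hd := (Nat.modEq_iff_dvd' hlt.le).mp hc.symm
  have := Nat.le_of_dvd (by omega) hd
  have he : B.relIndex A = Nat.card (A ⧸ B.subgroupOf A) := rfl
  omega

theorem Cop.pow_mem [Finite G] (h : Cop φ p) {B : Subgroup G} {v : G}
    (hv : v ^ p ∈ B) : v ∈ B := by
  obtain ⟨m, hm⟩ := h.card
  have h1 : v ^ 2 ^ m = 1 := by rw [← hm]; exact pow_card_eq_one'
  have hcop : Nat.Coprime p (2 ^ m) := by
    apply Nat.Coprime.pow_right
    exact (Nat.coprime_primes h.prime Nat.prime_two).mpr h.odd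
  have hb := Nat.gcd_eq_gcd_ab p (2 ^ m)
  rw [hcop.gcd_eq_one] at hb
  have e : v = (v ^ p) ^ (Nat.gcdA p (2 ^ m)) := by
    have h2 : v ^ ((1 : ℕ) : ℤ) = v ^ ((p : ℤ) * p.gcdA (2 ^ m) + ((2 ^ m : ℕ) : ℤ) * p.gcdB (2 ^ m)) := by
      rw [← hb]
    rw [zpow_add, zpow_mul, zpow_mul, zpow_natCast, zpow_natCast, zpow_natCast, h1, one_zpow,
      mul_one, pow_one] at h2
    exact h2
  rw [e]
  exact B.zpow_mem hv _

/-- Trivial action modulo `B` on `[u, φ]` forces `[u, φ] ∈ B`. -/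
theorem Cop.mem_of_trivial [Finite G] (h : Cop φ p) {B : Subgroup G} [B.Normal] (hB : PhiInv φ B)
    {u : G} (hv : (u⁻¹ * φ u)⁻¹ * φ (u⁻¹ * φ u) ∈ B) : u⁻¹ * φ u ∈ B := by
  set v := u⁻¹ * φ u with hvd
  have hu : φ u = u * v := by rw [hvd]; group
  have key : ∀ k : ℕ, (u * v ^ k)⁻¹ * φ^[k] u ∈ B := by
    intro k
    induction k with
    | zero => simp
    | succ k ih =>
      rw [Function.iterate_succ_apply']
      have h1 := hB _ ih
      have hv' : ∀ k : ℕ, (v ^ k)⁻¹ * φ (v ^ k) ∈ B := by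
        intro k
        rw [← QuotientGroup.eq, map_pow, QuotientGroup.mk_pow, QuotientGroup.mk_pow,
          QuotientGroup.eq.mpr hv]
      have e : (u * v ^ (k + 1))⁻¹ * φ (φ^[k] u) =
          ((v ^ k)⁻¹ * ((u⁻¹ * φ u)⁻¹ * v) * v ^ k)⁻¹ *
            ((v ^ k)⁻¹ * φ (v ^ k) * φ ((u * v ^ k)⁻¹ * φ^[k] u)) := by
        simp only [map_mul, map_inv, ← hvd, hu, pow_succ']
        group
      rw [e]
      refine B.mul_mem (B.inv_mem ?_) (B.mul_mem (hv' k) h1)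
      rw [← hvd]; simp
  have h2 := key p
  rw [h.iter] at h2
  have h3 : v ^ p ∈ B := by
    have e : (u * v ^ p)⁻¹ * u = (v ^ p)⁻¹ := by
      rw [mul_inv_rev, mul_assoc, inv_mul_cancel, mul_one]
    rw [e] at h2
    exact inv_mem_iff.mp h2
  exact h.pow_mem h3

theorem inv_bot (φ : G ≃* G) : PhiInv φ ⊥ := by
  intro a ha
  rw [Subgroup.mem_bot] at *
  rw [ha, map_one]

/-- If `[u, φ]` is fixed then so is `u`. -/
theorem Cop.fixed_of [Finite G] (h : Cop φ p) {u : G} (hv : u⁻¹ * φ u ∈ fixC φ) : u ∈ fixC φ := by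
  have h1 : u⁻¹ * φ u ∈ (⊥ : Subgroup G) := by
    apply h.mem_of_trivial (inv_bot φ)
    rw [mem_fixC] at hv
    rw [hv, inv_mul_cancel]
    exact Subgroup.one_mem _
  rw [Subgroup.mem_bot, inv_mul_eq_one] at h1
  exact h1.symm

theorem inv_char (φ : G ≃* G) (A : Subgroup G) [hA : A.Characteristic] : PhiInv φ A := by
  intro a ha
  have := hA.fixed φ
  rw [← this] at ha
  exact ha

/-- Key computation. -/
theorem comm_of_fixed {N : Subgroup G} [N.Normal] {c g : G} (hc : c ∈ fixC φ)
    (h : ⁅c, g⁆⁻¹ * φ ⁅c, g⁆ ∈ N) : ⁅c, g⁻¹ * φ g⁆ ∈ N := by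
  rw [mem_fixC] at hc
  rw [map_commutatorElement, hc] at h
  have e : ⁅c, g⁻¹ * φ g⁆ = g⁻¹ * (⁅c, g⁆⁻¹ * ⁅c, φ g⁆) * g⁻¹⁻¹ := by
    simp only [commutatorElement_def]; group
  rw [e]
  exact Subgroup.Normal.conj_mem inferInstance _ h _

/-- Three subgroups lemma modulo a normal subgroup. -/
theorem three_sub {A B C N : Subgroup G} [N.Normal] (h1 : ⁅⁅B, C⁆, A⁆ ≤ N)
    (h2 : ⁅⁅C, A⁆, B⁆ ≤ N) : ⁅⁅A, B⁆, C⁆ ≤ N := by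
  have key : ∀ X : Subgroup G, X ≤ N ↔ X.map (QuotientGroup.mk' N) = ⊥ := by
    intro X
    rw [Subgroup.map_eq_bot_iff, QuotientGroup.ker_mk']
  rw [key] at *
  simp only [Subgroup.map_commutator] at *
  exact Subgroup.commutator_commutator_eq_bot_of_rotate h1 h2

end

open KGen
open scoped commutatorElement
/-! ## Lower central series -/

/-- Terms of the lower central series, starting with `lc G 0 = G`. -/
abbrev lc (G : Type*) [Group G] (i : ℕ) : Subgroup G := (⊤ : Subgroup G).lowerCentralSeries i

section
variable {G : Type*} [Group G]

theorem lc_anti {i j : ℕ} (h : i ≤ j) : lc G j ≤ lc G i :=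
  Subgroup.lowerCentralSeries_antitone (S := (⊤ : Subgroup G)) h

theorem lc_succ (i : ℕ) : lc G (i + 1) = ⁅lc G i, ⊤⁆ := rfl

theorem comm_lc (i j : ℕ) : ⁅lc G i, lc G j⁆ ≤ lc G (i + j + 1) := by
  induction i generalizing j with
  | zero =>
    rw [Subgroup.commutator_comm, zero_add, lc_succ]
    exact Subgroup.commutator_mono le_rfl le_top
  | succ i ih =>
    rw [lc_succ]
    apply three_sub
    · rw [Subgroup.commutator_comm ⊤, ← lc_succ, Subgroup.commutator_comm]
      exact (ih (j + 1)).trans (lc_anti (by omega))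
    · rw [Subgroup.commutator_comm (lc G j)]
      calc ⁅⁅lc G i, lc G j⁆, (⊤ : Subgroup G)⁆ ≤ ⁅lc G (i + j + 1), ⊤⁆ :=
            Subgroup.commutator_mono (ih j) le_rfl
        _ = lc G (i + 1 + j + 1) := by rw [← lc_succ]; congr 1; omega

theorem comm_lc' {i j k : ℕ} (h : k ≤ i + j + 1) : ⁅lc G i, lc G j⁆ ≤ lc G k :=
  (comm_lc i j).trans (lc_anti h)

theorem comm_mem_lc {i : ℕ} {u : G} (hu : u ∈ lc G i) (g : G) : ⁅u, g⁆ ∈ lc G (i + 1) :=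
  Subgroup.commutator_mem_commutator hu (Subgroup.mem_top g)

theorem comm_mem_lc' {i : ℕ} {u : G} (hu : u ∈ lc G i) (g : G) : ⁅g, u⁆ ∈ lc G (i + 1) := by
  rw [← commutatorElement_inv]
  exact Subgroup.inv_mem _ (comm_mem_lc hu g)

theorem lc_stab {i : ℕ} (h : lc G i ≤ lc G (i + 1)) (k : ℕ) : lc G i ≤ lc G (i + k) := by
  induction k with
  | zero => exact le_rfl
  | succ k ih =>
    refine h.trans ?_
    rw [lc_succ, ← add_assoc, lc_succ]
    exact Subgroup.commutator_mono ih le_rfl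

theorem sum_bounds (e : ℕ → ℕ) (c : ℕ) (h1 : ∀ i < c, 1 ≤ e i)
    (hs : ∑ i ∈ Finset.range c, e i = c + 3) :
    ∑ i ∈ Finset.range c, (e i - 1) = 3 := by
  have : ∑ i ∈ Finset.range c, e i = ∑ i ∈ Finset.range c, (e i - 1) + c := by
    have h2 : ∑ i ∈ Finset.range c, e i = ∑ i ∈ Finset.range c, ((e i - 1) + 1) :=
      Finset.sum_congr rfl (fun i hi => by
        have := h1 i (Finset.mem_range.mp hi); omega)
    rw [h2, Finset.sum_add_distrib]; simp
  omega

theorem cc_data [Finite G] [Group.IsNilpotent G] {m : ℕ} (hm : 8 ≤ m)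
    (hcard : Nat.card G = 2 ^ m) (hclass : Group.nilpotencyClass G = m - 3) :
    ∃ e : ℕ → ℕ, (∀ i, (lc G (i + 1)).relIndex (lc G i) = 2 ^ e i) ∧
      (∀ i < m - 3, 1 ≤ e i) ∧ e 0 ≤ 4 ∧ (∀ i, 1 ≤ i → i < m - 3 → e 0 + e i ≤ 5) ∧
      (∀ i j, 1 ≤ i → i < j → j < m - 3 → e 0 + e i + e j ≤ 6) ∧
      ∀ i, m - 3 ≤ i → lc G i = ⊥ := by
  have hbot : ∀ i, m - 3 ≤ i ↔ lc G i = ⊥ := by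
    intro i
    rw [← hclass]
    exact (Subgroup.lowerCentralSeries_eq_bot_iff_nilpotencyClass_le).symm
  have hpow : ∀ i, ∃ k, (lc G (i + 1)).relIndex (lc G i) = 2 ^ k := by
    intro i
    have h1 : (lc G (i + 1)).relIndex (lc G i) ∣ 2 ^ m := by
      rw [← hcard]
      exact (Subgroup.relIndex_dvd_card _ _).trans (Subgroup.card_subgroup_dvd_card _)
    obtain ⟨k, -, hk⟩ := (Nat.dvd_prime_pow Nat.prime_two).mp h1
    exact ⟨k, hk⟩
  choose e he using hpow
  have hpos : ∀ i < m - 3, 1 ≤ e i := by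
    intro i hi
    by_contra h0
    have h0 : e i = 0 := by omega
    have h1 := he i
    rw [h0, pow_zero, Subgroup.relIndex_eq_one] at h1
    have h2 := lc_stab h1 (m - 3 - i)
    rw [show i + (m - 3 - i) = m - 3 by omega, (hbot (m - 3)).mp le_rfl, le_bot_iff,
      ← hbot] at h2
    omega
  have hidx : ∀ k, (lc G k).index = 2 ^ (∑ i ∈ Finset.range k, e i) := by
    intro k
    induction k with
    | zero => simp [lc]
    | succ k ih =>
      rw [Finset.sum_range_succ, pow_add, ← ih, ← he, mul_comm,
        Subgroup.relIndex_mul_index (lc_anti (Nat.le_succ k))]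
  have hsum : ∑ i ∈ Finset.range (m - 3), e i = m := by
    have h1 := hidx (m - 3)
    rw [(hbot (m - 3)).mp le_rfl, Subgroup.index_bot, hcard] at h1
    exact (Nat.pow_right_injective le_rfl h1).symm
  have h3 := sum_bounds e (m - 3) hpos (by omega)
  have hle : ∀ s : Finset ℕ, (∀ i ∈ s, i < m - 3) → ∑ i ∈ s, (e i - 1) ≤ 3 := by
    intro s hs
    rw [← h3]
    exact Finset.sum_le_sum_of_subset (fun i hi => Finset.mem_range.mpr (hs i hi))
  have p0 := hpos 0 (by omega)
  refine ⟨e, he, hpos, ?_, ?_, ?_, fun i hi => (hbot i).mp hi⟩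
  · have := hle {0} (by simp; omega)
    simp at this; omega
  · intro i hi hi2
    have := hle {0, i} (by simp; omega)
    rw [Finset.sum_pair (by omega)] at this
    have := hpos i hi2
    omega
  · intro i j hi hij hj
    have := hle {0, i, j} (by simp; omega)
    rw [Finset.sum_insert (by simp; omega), Finset.sum_pair (by omega)] at this
    have := hpos i (by omega)
    have := hpos j (by omega)
    omega

/-- Trivial action on the lower central factors from `j` on implies `φ` fixes `lc G j`. -/
theorem Cop.fixes_lc [Finite G] {φ : G ≃* G} {p c : ℕ} (h : Cop φ p) (hc : ∀ i, c ≤ i → lc G i = ⊥)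
    (j : ℕ) (ht : ∀ i, j ≤ i → i < c → ∀ u ∈ lc G i, u⁻¹ * φ u ∈ lc G (i + 1)) :
    lc G j ≤ fixC φ := by
  have key : ∀ d k, j ≤ k → c ≤ k + d → lc G k ≤ fixC φ := by
    intro d
    induction d with
    | zero => intro k _ hk; rw [hc k hk]; exact bot_le
    | succ d ih =>
      intro k hjk hk
      by_cases hkc : k < c
      · intro u hu
        apply h.fixed_of
        exact ih (k + 1) (by omega) (by omega) (ht k hjk hkc u hu)
      · rw [hc k (by omega)]; exact bot_le
  exact key c j le_rfl (by omega)

theorem Cop.triv_of_two [Finite G] {φ : G ≃* G} {p : ℕ} (h : Cop φ p) {A B : Subgroup G}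
    (hA : PhiInv φ A) (hB : PhiInv φ B) (hi : B.relIndex A ≤ 2) {u : G} (hu : u ∈ A) :
    u⁻¹ * φ u ∈ B := by
  by_contra hn
  have := h.relIndex_ge hA hB hu hn
  have := h.prime.two_le
  omega

theorem Cop.eq_three [Finite G] {φ : G ≃* G} {p : ℕ} (h : Cop φ p) {A B : Subgroup G}
    (hA : PhiInv φ A) (hB : PhiInv φ B) (hi : B.relIndex A ≤ 4) {u : G} (hu : u ∈ A)
    (hn : u⁻¹ * φ u ∉ B) : p = 3 := by
  have := h.relIndex_ge hA hB hu hn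
  have := h.prime.two_le
  have := h.odd
  omega

theorem Cop.three_le {φ : G ≃* G} {p : ℕ} (h : Cop φ p) : 3 ≤ p := by
  have := h.prime.two_le
  have := h.odd
  omega

/-- Every element is a product of a fixed element and an element of `[G, φ]`. -/
theorem Cop.factor [Finite G] {φ : G ≃* G} {p : ℕ} (h : Cop φ p) (g : G) :
    ∃ c ∈ fixC φ, ∃ q ∈ movQ φ ⊤, g = c * q := by
  obtain ⟨c, hc, hcg⟩ := h.exists_fixed (inv_movQ (inv_top φ)) (mem_movQ (Subgroup.mem_top g))
  exact ⟨c, hc, c⁻¹ * g, by have := Subgroup.inv_mem _ hcg; simpa using this, by group⟩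

end

open KGen
open scoped commutatorElement
/-! ## The case where `φ` fixes the derived subgroup pointwise -/

section
variable {G : Type*} [Group G] [Finite G] {φ : G ≃* G} {p : ℕ}

theorem Cop.movQ_cent (_h : Cop φ p) (hfix : lc G 1 ≤ fixC φ) {c q : G} (hc : c ∈ fixC φ)
    (hq : q ∈ movQ φ ⊤) : Commute c q := by
  have : movQ φ ⊤ ≤ Subgroup.centralizer {c} := by
    apply movQ_le
    intro g _
    have h1 : ⁅c, g⁻¹ * φ g⁆ ∈ (⊥ : Subgroup G) := by
      apply comm_of_fixed hc
      have h2 : φ ⁅c, g⁆ = ⁅c, g⁆ := hfix (comm_mem_lc (i := 0) (Subgroup.mem_top c) g)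
      rw [h2, inv_mul_cancel]
      exact Subgroup.one_mem _
    rw [Subgroup.mem_bot, commutatorElement_eq_one_iff_mul_comm] at h1
    rw [Subgroup.mem_centralizer_iff]
    intro x hx
    rw [Set.mem_singleton_iff] at hx
    rw [hx]; exact h1
  have h3 := Subgroup.mem_centralizer_iff.mp (this hq) c rfl
  exact h3

theorem index_pow_two {m : ℕ} (hcard : Nat.card G = 2 ^ m) (A : Subgroup G) :
    ∃ k, A.index = 2 ^ k := by
  have h1 : A.index ∣ 2 ^ m := hcard ▸ A.index_dvd_card
  obtain ⟨k, -, hk⟩ := (Nat.dvd_prime_pow Nat.prime_two).mp h1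
  exact ⟨k, hk⟩

theorem relIndex_pow_two {m : ℕ} (hcard : Nat.card G = 2 ^ m) (A B : Subgroup G) :
    ∃ k, A.relIndex B = 2 ^ k := by
  have h1 : A.relIndex B ∣ 2 ^ m :=
    hcard ▸ (Subgroup.relIndex_dvd_card _ _).trans (Subgroup.card_subgroup_dvd_card _)
  obtain ⟨k, -, hk⟩ := (Nat.dvd_prime_pow Nat.prime_two).mp h1
  exact ⟨k, hk⟩

/-- If `A` has relative index at most two in `B` and `A` commutes with `B` modulo `N`, then
`[B, B] ≤ N`. -/
theorem comm_le_of_relIndex_two {A B N : Subgroup G} [N.Normal] (hi : A.relIndex B ≤ 2)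
    (hAB : ⁅A, B⁆ ≤ N) : ⁅B, B⁆ ≤ N := by
  have hpos : A.relIndex B ≠ 0 := Subgroup.index_ne_zero_of_finite
  have hAB' : ∀ a ∈ A, ∀ b ∈ B, ⁅a, b⁆ ∈ N := fun a ha b hb =>
    hAB (Subgroup.commutator_mem_commutator ha hb)
  have hmem : ∀ x ∈ B, ∀ y ∈ B, x ∈ A ∨ y ∈ A ∨ x * y⁻¹ ∈ A := by
    intro x hx y hy
    have : A.relIndex B = 1 ∨ A.relIndex B = 2 := by omega
    rcases this with h | h
    · left; exact Subgroup.relIndex_eq_one.mp h hx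
    · have hidx : (A.subgroupOf B).index = 2 := h
      by_cases h1 : x ∈ A
      · exact Or.inl h1
      by_cases h2 : y ∈ A
      · exact Or.inr (Or.inl h2)
      right; right
      have h3 := (Subgroup.mul_mem_iff_of_index_two hidx (a := ⟨x, hx⟩) (b := ⟨y, hy⟩⁻¹)).mpr
      rw [Subgroup.inv_mem_iff] at h3
      have h4 : (⟨x, hx⟩ : B) * ⟨y, hy⟩⁻¹ ∈ A.subgroupOf B := by
        apply h3
        rw [Subgroup.mem_subgroupOf, Subgroup.mem_subgroupOf]
        tauto
      exact h4
  rw [Subgroup.commutator_le]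
  intro x hx y hy
  rcases hmem x hx y hy with h | h | h
  · exact hAB' x h y hy
  · rw [← commutatorElement_inv]; exact N.inv_mem (hAB' y h x hx)
  · have e : ⁅x, y⁆ = ⁅x * y⁻¹, y⁆ := by simp only [commutatorElement_def]; group
    rw [e]; exact hAB' _ h y hy

theorem caseT_struct {m : ℕ} (h : Cop φ p) (hcard : Nat.card G = 2 ^ m) (hφ : ∃ g, φ g ≠ g)
    (hfix : lc G 1 ≤ fixC φ) (hi16 : (lc G 1).index ≤ 16)
    (he1 : (lc G 1).index = 16 → (lc G 2).relIndex (lc G 1) = 2)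
    (h23 : ¬ lc G 2 ≤ lc G 3) :
    p = 3 ∧ (fixC φ).index = 4 ∧ (lc G 1).relIndex (fixC φ) = 4 ∧ ⁅fixC φ, fixC φ⁆ = lc G 1 := by
  set C := fixC φ with hC
  have hCn : C.Normal := Subgroup.Normal.of_commutator_le G (H := C) hfix
  have hiC : p + 1 ≤ C.index := by
    obtain ⟨g, hg⟩ := hφ
    rw [← Subgroup.relIndex_top_right]
    apply h.relIndex_ge (inv_top φ) (inv_fixC φ) (Subgroup.mem_top g)
    intro h1
    exact hg (h.fixed_of h1)
  have h3 := h.three_le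
  have hgen : ∀ u ∈ lc G 1, ∃ a ∈ ⁅C, C⁆, ∃ z ∈ Subgroup.center G, u = a * z := by
    have hle : lc G 1 ≤ ⁅C, C⁆ ⊔ Subgroup.center G := by
      rw [lc_succ, Subgroup.commutator_le]
      intro g _ g' _
      obtain ⟨c, hc, q, hq, rfl⟩ := h.factor g
      obtain ⟨c', hc', q', hq', rfl⟩ := h.factor g'
      have e1 := (h.movQ_cent hfix hc hq').eq
      have e2 := (h.movQ_cent hfix hc' hq).eq
      have e : ⁅c * q, c' * q'⁆ = ⁅c, c'⁆ * ⁅q, q'⁆ := by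
        have hq1 : Commute ⁅q, q'⁆ c'⁻¹ := by
          have : ⁅q, q'⁆ ∈ movQ φ ⊤ :=
            Subgroup.commutator_le_self _ (Subgroup.commutator_mem_commutator hq hq')
          exact (h.movQ_cent hfix (C.inv_mem hc') this).symm
        have hq2 : Commute ⁅q, q'⁆ c⁻¹ := by
          have : ⁅q, q'⁆ ∈ movQ φ ⊤ :=
            Subgroup.commutator_le_self _ (Subgroup.commutator_mem_commutator hq hq')
          exact (h.movQ_cent hfix (C.inv_mem hc) this).symm
        calc ⁅c * q, c' * q'⁆ = c * (q * c') * q' * q⁻¹ * c⁻¹ * q'⁻¹ * c'⁻¹ := by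
              simp only [commutatorElement_def]; group
          _ = c * (c' * q) * q' * q⁻¹ * c⁻¹ * q'⁻¹ * c'⁻¹ := by
              rw [← e2]
          _ = c * c' * (q * q' * q⁻¹ * (q' * c)⁻¹) * c'⁻¹ := by group
          _ = c * c' * (⁅q, q'⁆ * c⁻¹) * c'⁻¹ := by
              rw [← e1]; simp only [commutatorElement_def]; group
          _ = c * c' * c⁻¹ * (⁅q, q'⁆ * c'⁻¹) := by rw [hq2.eq]; group
          _ = ⁅c, c'⁆ * ⁅q, q'⁆ := by rw [hq1.eq]; simp only [commutatorElement_def]; group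
      rw [e]
      refine Subgroup.mul_mem_sup (Subgroup.commutator_mem_commutator hc hc') ?_
      have hm1 : ⁅q, q'⁆ ∈ C := hfix (comm_mem_lc (i := 0) (Subgroup.mem_top q) q')
      have hm2 : ⁅q, q'⁆ ∈ movQ φ ⊤ :=
        Subgroup.commutator_le_self _ (Subgroup.commutator_mem_commutator hq hq')
      rw [Subgroup.mem_center_iff]
      intro x
      obtain ⟨c1, hc1, q1, hq1, rfl⟩ := h.factor x
      have a1 := h.movQ_cent hfix hc1 hm2
      have a2 := h.movQ_cent hfix hm1 hq1
      exact (a1.mul_left a2.symm).eq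
    intro u hu
    have := hle hu
    rw [Subgroup.mem_sup_of_normal_right] at this
    obtain ⟨a, ha, z, hz, rfl⟩ := this
    exact ⟨a, ha, z, hz, rfl⟩
  have hcm : ∀ a z g : G, z ∈ Subgroup.center G → ⁅a * z, g⁆ = ⁅a, g⁆ := by
    intro a z g hz
    have hzg := Subgroup.mem_center_iff.mp hz
    have : z * g * z⁻¹ = g := by rw [← hzg g]; group
    calc ⁅a * z, g⁆ = a * (z * g * z⁻¹) * a⁻¹ * g⁻¹ := by
          simp only [commutatorElement_def]; group
      _ = ⁅a, g⁆ := by rw [this]; rfl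
  have hnot : ¬ ⁅C, C⁆ ≤ lc G 2 := by
    intro hle
    apply h23
    rw [lc_succ, Subgroup.commutator_le]
    intro u hu g _
    obtain ⟨a, ha, z, hz, rfl⟩ := hgen u hu
    rw [hcm _ _ _ hz]
    exact comm_mem_lc (hle ha) g
  have hrel : 4 ≤ (lc G 1).relIndex C := by
    by_contra hlt
    obtain ⟨k, hk⟩ := relIndex_pow_two hcard (lc G 1) C
    have hk2 : (lc G 1).relIndex C ≤ 2 := by
      rcases k with _ | _ | k
      · rw [hk]; norm_num
      · rw [hk]; norm_num
      · rw [hk] at hlt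
        have : 2 ^ (k + 1 + 1) = 4 * 2 ^ k := by ring
        have : 0 < 2 ^ k := by positivity
        omega
    exact hnot (comm_le_of_relIndex_two hk2
      (Subgroup.commutator_mono le_rfl le_top))
  have hmul : (lc G 1).relIndex C * C.index = (lc G 1).index := Subgroup.relIndex_mul_index hfix
  have hC4 : C.index = 4 := by nlinarith
  have hR4 : (lc G 1).relIndex C = 4 := by nlinarith
  refine ⟨by omega, hC4, hR4, le_antisymm (Subgroup.commutator_mono le_top le_top) ?_⟩
  have h16 : (lc G 1).index = 16 := by rw [← hmul, hC4, hR4]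
  have h2 := he1 h16
  have hl2 : lc G 2 ≤ ⁅C, C⁆ := by
    rw [lc_succ, Subgroup.commutator_le]
    intro u hu g _
    obtain ⟨a, ha, z, hz, rfl⟩ := hgen u hu
    rw [hcm _ _ _ hz]
    exact Subgroup.commutator_le_left _ ⊤
      (Subgroup.commutator_mem_commutator ha (Subgroup.mem_top g))
  have hm := Subgroup.relIndex_mul_relIndex (lc G 2) ⁅C, C⁆ (lc G 1) hl2
    (Subgroup.commutator_mono le_top le_top)
  rw [h2] at hm
  have hne1 : (lc G 2).relIndex ⁅C, C⁆ ≠ 1 := fun h => hnot (Subgroup.relIndex_eq_one.mp h)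
  rw [← Subgroup.relIndex_eq_one]
  have hd : (lc G 2).relIndex ⁅C, C⁆ ∣ 2 := ⟨_, hm.symm⟩
  have := (Nat.dvd_prime Nat.prime_two).mp hd
  have h5 : (lc G 2).relIndex ⁅C, C⁆ = 2 := by tauto
  rw [h5] at hm
  omega

end

open KGen
open scoped commutatorElement

theorem kappa_cases {M : Type*} [Group M] {n : ℕ} {r s k : M} (hr : orderOf r = 2 ^ (n + 3))
    (hi : (Subgroup.zpowers r).index = 2) (hs : s ∉ Subgroup.zpowers r)
    (h1 : s⁻¹ * r * s = r⁻¹ ∨ s⁻¹ * r * s = r⁻¹ * r ^ 2 ^ (n + 2))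
    (hk : k ^ 2 = 1) (hkr : Commute k r) : k = 1 ∨ k = r ^ 2 ^ (n + 2) := by
  have hz2 : (r ^ 2 ^ (n + 2)) ^ 2 = 1 := by
    rw [← pow_mul, ← pow_succ, ← hr, pow_orderOf_eq_one]
  have hkm : k ∈ Subgroup.zpowers r := by
    by_contra hn
    have h2 : k * s⁻¹ ∈ Subgroup.zpowers r := by
      rw [Subgroup.mul_mem_iff_of_index_two hi, Subgroup.inv_mem_iff]
      tauto
    obtain ⟨j, hj⟩ := h2
    simp only at hj
    have hsr : Commute s r := by
      have : s = (r ^ j)⁻¹ * k := by rw [hj]; group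
      rw [this]
      exact (((Commute.refl r).zpow_left j).inv_left).mul_left hkr
    rw [commute_conj hsr] at h1
    have h4 : r ^ 4 = 1 := by
      rcases h1 with h | h
      · have h5 : r ^ 2 = 1 := by rw [pow_two]; nth_rw 1 [h]; simp
        rw [show 4 = 2 * 2 from rfl, pow_mul, h5, one_pow]
      · have h5 : r ^ 2 = r ^ 2 ^ (n + 2) := by
          calc r ^ 2 = r * r := pow_two r
            _ = r * (r⁻¹ * r ^ 2 ^ (n + 2)) := by rw [← h]
            _ = _ := by group
        rw [show 4 = 2 * 2 from rfl, pow_mul, h5, hz2]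
    have h6 := Nat.le_of_dvd (by norm_num) (orderOf_dvd_of_pow_eq_one h4)
    rw [hr] at h6
    have : 2 ^ (n + 3) = 8 * 2 ^ n := by ring
    have : 0 < 2 ^ n := by positivity
    omega
  obtain ⟨j, hj⟩ := hkm
  simp only at hj
  subst hj
  rw [← zpow_natCast, ← zpow_mul] at hk
  have hd := orderOf_dvd_iff_zpow_eq_one.mpr hk
  rw [hr] at hd
  obtain ⟨i, hi⟩ := hd
  have hji : j = ((2 ^ (n + 2) : ℕ) : ℤ) * i := by
    push_cast at hi ⊢
    have : (2 : ℤ) ^ (n + 3) = 2 * 2 ^ (n + 2) := by ring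
    rw [this] at hi
    linarith
  rw [hji, zpow_mul, zpow_natCast]
  rcases Int.even_or_odd i with ⟨h, rfl⟩ | ⟨h, rfl⟩
  · left
    rw [← two_mul, zpow_mul, zpow_ofNat, hz2, one_zpow]
  · right
    rw [zpow_add, zpow_mul, zpow_ofNat, hz2, one_zpow, one_mul, zpow_one]

section
variable {G : Type*} [Group G] [Finite G] {φ : G ≃* G} {p : ℕ}

theorem exists_xy (h : Cop φ 3) (hφ : ∃ g, φ g ≠ g)
    (hfix : lc G 1 ≤ fixC φ) (hC4 : (fixC φ).index = 4) :
    ∃ x y : G, x ∈ movQ φ ⊤ ∧ y ∈ movQ φ ⊤ ∧ x ∉ fixC φ ∧ φ x = y ∧ φ y = (x * y)⁻¹ ∧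
      x ^ 2 ∈ fixC φ ∧ (x ^ 2) ^ 2 = 1 ∧ y ^ 2 = x ^ 2 ∧ y * x = x ^ 2 * (x * y) := by
  set C := fixC φ with hC
  set Q := movQ φ ⊤ with hQ
  have hCn : C.Normal := Subgroup.Normal.of_commutator_le G (H := C) hfix
  have hQi : PhiInv φ Q := inv_movQ (inv_top φ)
  have hcent : ∀ c ∈ C, ∀ q ∈ Q, Commute c q := fun c hc q hq => h.movQ_cent hfix hc hq
  have hcc : ∀ a b : G, ⁅a, b⁆ ∈ C := fun a b =>
    hfix (comm_mem_lc (i := 0) (Subgroup.mem_top a) b)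
  have h3 : ∀ g, φ (φ (φ g)) = g := fun g => h.iter g
  -- squares lie in C
  have hsq : ∀ g, g ^ 2 ∈ C := by
    let D : Subgroup G :=
      { carrier := {g | g ^ 2 ∈ C}
        mul_mem' := by
          intro a b ha hb
          have ha : a ^ 2 ∈ C := ha
          have hb : b ^ 2 ∈ C := hb
          show (a * b) ^ 2 ∈ C
          have e : (a * b) ^ 2 = a ^ 2 * (a⁻¹ * ⁅b, a⁆ * a⁻¹⁻¹) * b ^ 2 := by
            simp only [commutatorElement_def, pow_two]; group
          rw [e]
          exact C.mul_mem (C.mul_mem ha (hCn.conj_mem _ (hcc b a) _)) hb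
        one_mem' := by
          show (1 : G) ^ 2 ∈ C
          rw [one_pow]; exact C.one_mem
        inv_mem' := by
          intro a ha
          have ha : a ^ 2 ∈ C := ha
          show (a⁻¹) ^ 2 ∈ C
          rw [inv_pow]; exact C.inv_mem ha }
    have hD : ∀ g, g ∈ D ↔ g ^ 2 ∈ C := fun g => Iff.rfl
    have hCD : C ≤ D := fun c hc => C.pow_mem hc 2
    have hDi : PhiInv φ D := by
      intro g hg
      rw [hD] at *
      rw [← map_pow]
      exact inv_fixC φ _ hg
    obtain ⟨g, hg⟩ := hφ
    have : ∃ d ∈ D, d ∉ C := by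
      by_cases h1 : g ∈ D
      · exact ⟨g, h1, hg⟩
      · refine ⟨g ^ 2, ?_, fun h2 => h1 h2⟩
        rw [hD, ← pow_mul]
        have := C.pow_index_mem g
        rwa [hC4] at this
    obtain ⟨d, hdD, hdC⟩ := this
    have h4 := h.relIndex_ge hDi (inv_fixC φ) hdD (fun h1 => hdC (h.fixed_of h1))
    have h5 := Subgroup.relIndex_mul_index hCD
    rw [hC4] at h5
    have h6 : D.index = 1 := by
      have : D.index ≠ 0 := Subgroup.index_ne_zero_of_finite
      have h7 : 4 ≤ C.relIndex D := h4
      nlinarith [Nat.pos_of_ne_zero this]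
    rw [Subgroup.index_eq_one] at h6
    intro g
    have : g ∈ D := h6 ▸ Subgroup.mem_top g
    exact this
  -- choose x
  have hx : ∃ x ∈ Q, x ∉ C := by
    obtain ⟨g, hg⟩ := hφ
    obtain ⟨c, hc, q, hq, rfl⟩ := h.factor g
    refine ⟨q, hq, fun h1 => hg (C.mul_mem hc h1)⟩
  obtain ⟨x0, hx0, hx0C⟩ := hx
  have hprod : ∀ x, x * φ x * φ (φ x) ∈ C := by
    intro x
    apply h.fixed_of
    apply (show _ ∈ C from ?_)
    have e : (x * φ x * φ (φ x))⁻¹ * φ (x * φ x * φ (φ x)) =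
        (x * φ x * φ (φ x))⁻¹ * x * (x⁻¹ * (φ x * φ (φ x)) * x * (φ x * φ (φ x))⁻¹) *
          ((x * φ x * φ (φ x))⁻¹ * x)⁻¹ := by
      simp only [map_mul, h3]; group
    rw [e]
    apply hCn.conj_mem
    have e2 : x⁻¹ * (φ x * φ (φ x)) * x * (φ x * φ (φ x))⁻¹ = ⁅x⁻¹, φ x * φ (φ x)⁆ := by
      simp only [commutatorElement_def]; group
    rw [e2]
    exact hcc _ _
  set ζ := x0 * φ x0 * φ (φ x0) with hζ
  have hζC : ζ ∈ C := hprod x0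
  have hζQ : ζ ∈ Q := Q.mul_mem (Q.mul_mem hx0 (hQi _ hx0)) (hQi _ (hQi _ hx0))
  have hcent2 : ∀ z ∈ C, z ∈ Q → ∀ g, Commute z g := by
    intro z hzC hzQ g
    obtain ⟨c, hc, q, hq, rfl⟩ := h.factor g
    exact (hcent c hc z hzQ).symm.mul_right (hcent z hzC q hq)
  obtain ⟨u, huC, huQ, hu3⟩ : ∃ u, u ∈ C ∧ u ∈ Q ∧ u ^ 3 = ζ⁻¹ := by
    have h1 : ζ ∈ Subgroup.zpowers (ζ ^ 3) :=
      h.pow_mem (v := ζ) (B := Subgroup.zpowers (ζ ^ 3)) (Subgroup.mem_zpowers _)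
    obtain ⟨j, hj⟩ := h1
    simp only at hj
    refine ⟨ζ ^ (-j), C.zpow_mem hζC _, Q.zpow_mem hζQ _, ?_⟩
    rw [← zpow_natCast, ← zpow_mul]
    nth_rw 2 [← hj]
    rw [← zpow_neg, ← zpow_natCast ζ 3, ← zpow_mul]
    congr 1; ring
  have hφu : φ u = u := huC
  have hucomm : ∀ g, Commute u g := hcent2 u huC huQ
  set x := x0 * u with hxd
  have hxQ : x ∈ Q := Q.mul_mem hx0 huQ
  have hxC : x ∉ C := by
    intro h1
    apply hx0C
    have := C.mul_mem h1 (C.inv_mem huC)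
    rwa [hxd, mul_inv_cancel_right] at this
  have hz1 : x * φ x * φ (φ x) = 1 := by
    have : x * φ x * φ (φ x) = ζ * u ^ 3 := by
      rw [hxd, hζ]
      simp only [map_mul, hφu]
      have e1 := (hucomm (φ x0)).eq
      have e2 := (hucomm (φ (φ x0))).eq
      calc x0 * u * (φ x0 * u) * (φ (φ x0) * u)
          = x0 * (u * φ x0) * (u * φ (φ x0)) * u := by group
        _ = x0 * φ x0 * (u * (u * φ (φ x0))) * u := by rw [e1]; group
        _ = x0 * φ x0 * (u * φ (φ x0)) * u * u := by nth_rw 1 [e2]; group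
        _ = x0 * φ x0 * φ (φ x0) * u ^ 3 := by
          rw [e2]; simp only [pow_succ, pow_zero, one_mul, mul_assoc]
    rw [this, hu3, mul_inv_cancel]
  set y := φ x with hy
  have hyQ : y ∈ Q := hQi _ hxQ
  have hφy : φ y = (x * y)⁻¹ := eq_inv_of_mul_eq_one_right hz1
  have hx2C := hsq x
  have hx2c : ∀ g, Commute (x ^ 2) g := hcent2 _ hx2C (Q.pow_mem hxQ 2)
  have hy2 : y ^ 2 = x ^ 2 := by rw [hy, ← map_pow]; exact hx2C
  have hyy2 : (φ y) ^ 2 = x ^ 2 := by rw [← map_pow, hy2]; exact hx2C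
  set κ := ⁅y, x⁆ with hκ
  have hκc : ∀ g, Commute κ g := hcent2 κ (hcc y x)
    (Subgroup.commutator_le_self _ (Subgroup.commutator_mem_commutator hyQ hxQ))
  have hyx : y * x = κ * (x * y) := by rw [hκ, commutatorElement_def]; group
  have hκ2 : κ ^ 2 = 1 := by
    have e : y * x ^ 2 = κ ^ 2 * (x ^ 2 * y) := by
      calc y * x ^ 2 = (y * x) * x := by rw [pow_two]; exact (mul_assoc y x x).symm
        _ = κ * (x * y) * x := congrArg (· * x) hyx
        _ = κ * x * (y * x) := by group
        _ = κ * x * (κ * (x * y)) := congrArg (κ * x * ·) hyx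
        _ = κ * (x * κ) * (x * y) := by group
        _ = κ ^ 2 * (x ^ 2 * y) := by
          rw [← (hκc x).eq]; simp only [pow_two, mul_assoc]
    rw [← (hx2c y).eq] at e
    exact mul_right_cancel (b := x ^ 2 * y) (by rw [one_mul]; exact e.symm)
  have hxy2 : (x * y) ^ 2 = κ * (x ^ 2 * x ^ 2) := by
    calc (x * y) ^ 2 = x * (y * x) * y := by simp only [pow_two, mul_assoc]
      _ = (x * κ) * (x * y * y) := by rw [hyx]; simp only [mul_assoc]
      _ = κ * (x ^ 2 * y ^ 2) := by rw [← (hκc x).eq]; simp only [pow_two, mul_assoc]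
      _ = _ := by rw [hy2]
  have hrel : κ * (x ^ 2) ^ 3 = 1 := by
    have : (φ y) ^ 2 = ((x * y) ^ 2)⁻¹ := by rw [hφy, inv_pow]
    rw [hyy2, hxy2] at this
    calc κ * (x ^ 2) ^ 3 = (κ * (x ^ 2 * x ^ 2)) * x ^ 2 := by
          simp only [pow_succ, pow_zero, one_mul, mul_assoc]
      _ = 1 := by nth_rw 3 [this]; rw [mul_inv_cancel]
  have h4 : (x ^ 2) ^ 2 = 1 := by
    have h1 : ((x ^ 2) ^ 2) ^ 3 ∈ (⊥ : Subgroup G) := by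
      rw [Subgroup.mem_bot]
      have := congrArg (· ^ 2) hrel
      simp only [one_pow] at this
      rw [(hκc _).mul_pow, hκ2, one_mul, ← pow_mul] at this
      rw [← pow_mul]; exact this
    have := h.pow_mem h1
    rwa [Subgroup.mem_bot] at this
  have hκx : κ = x ^ 2 := by
    rw [pow_succ, h4, one_mul] at hrel
    have : κ = (x ^ 2)⁻¹ := eq_inv_of_mul_eq_one_left hrel
    rw [this]
    exact inv_eq_of_mul_eq_one_left (by rw [← pow_two, h4])
  exact ⟨x, y, hxQ, hyQ, hxC, rfl, hφy, hx2C, h4, hy2, by rw [← hκx]; exact hyx⟩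

theorem caseT {n : ℕ} (h : Cop φ p) (hcard : Nat.card G = 2 ^ (n + 6)) (hφ : ∃ g, φ g ≠ g)
    (hfix : lc G 1 ≤ fixC φ) (hi16 : (lc G 1).index ≤ 16)
    (he1 : (lc G 1).index = 16 → (lc G 2).relIndex (lc G 1) = 2)
    (h23 : ¬ lc G 2 ≤ lc G 3) : KConcl G n := by
  obtain ⟨rfl, hC4, hR4, hCC⟩ := caseT_struct h hcard hφ hfix hi16 he1 h23
  obtain ⟨x, y, hxQ, hyQ, hxC, hφx, hφy, hx2C, hx4, hy2, hyx⟩ := exists_xy h hφ hfix hC4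
  set C := fixC φ with hC
  have hcC : Nat.card C = 2 ^ (n + 1 + 3) := by
    have := C.card_mul_index
    rw [hC4, hcard] at this
    have e : 2 ^ (n + 6) = 2 ^ (n + 1 + 3) * 4 := by ring
    omega
  have hidx : (commutator C).index = 4 := by
    rw [← hR4, ← hCC, Subgroup.relIndex, ← Subgroup.map_subtype_commutator, Subgroup.subgroupOf,
      Subgroup.comap_map_eq_self_of_injective C.subtype_injective]
  obtain ⟨r, s, hr, hs, hri, h1, h2⟩ := max_class_structure C hcC hidx
  have e4 : 2 ^ (n + 1 + 1) = 4 * 2 ^ n := by ring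
  have hk : (⟨x ^ 2, hx2C⟩ : C) = 1 ∨ (⟨x ^ 2, hx2C⟩ : C) = r ^ 2 ^ (n + 2) := by
    refine kappa_cases hr hri hs h1 (Subtype.ext hx4) ?_
    refine Subtype.ext ?_
    exact ((h.movQ_cent hfix r.2 hxQ).pow_right 2).symm
  refine endgame hcard (r : G) (s : G) x y (x ^ 2) ?_ ?_ ?_
    (h.movQ_cent hfix s.2 hxQ).symm (h.movQ_cent hfix r.2 hxQ).symm
    (h.movQ_cent hfix s.2 hyQ).symm (h.movQ_cent hfix r.2 hyQ).symm rfl hy2 hyx ?_ ?_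
  · have : r ^ (8 * 2 ^ n) = 1 := by
      rw [show 8 * 2 ^ n = 2 ^ (n + 1 + 2) by ring, ← hr, pow_orderOf_eq_one]
    exact congrArg Subtype.val this
  · rw [e4] at h1
    rcases h1 with h1 | h1
    · left; exact congrArg Subtype.val h1
    · right; exact congrArg Subtype.val h1
  · rw [e4] at h2
    rcases h2 with h2 | h2
    · left; exact congrArg Subtype.val h2
    · right; exact congrArg Subtype.val h2
  · rw [show n + 2 = n + 1 + 1 by rfl, e4] at hk
    rcases hk with h2 | h2
    · left; exact congrArg Subtype.val h2
    · right; exact congrArg Subtype.val h2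
  · intro H hsH hrH hxH hyH
    have hrz : ∀ u : C, u ∈ Subgroup.zpowers r → (u : G) ∈ H := by
      rintro _ ⟨j, rfl⟩
      simp only [SubgroupClass.coe_zpow]
      exact H.zpow_mem hrH j
    have hCH : C ≤ H := by
      intro c hc
      by_cases h3 : (⟨c, hc⟩ : C) ∈ Subgroup.zpowers r
      · exact hrz _ h3
      · have h4 : (⟨c, hc⟩ : C) * s⁻¹ ∈ Subgroup.zpowers r := by
          rw [Subgroup.mul_mem_iff_of_index_two hri, Subgroup.inv_mem_iff]
          tauto
        have h5 := H.mul_mem (hrz _ h4) hsH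
        simpa using h5
    set A := C ⊔ Subgroup.closure {x, y} with hA
    have hAH : A ≤ H := by
      refine sup_le hCH ?_
      rw [Subgroup.closure_le]
      rintro g (rfl | rfl)
      · exact hxH
      · exact hyH
    have hxA : x ∈ A := (le_sup_right : _ ≤ A) (Subgroup.subset_closure (by simp))
    have hyA : y ∈ A := (le_sup_right : _ ≤ A) (Subgroup.subset_closure (by simp))
    have hAi : PhiInv φ A := by
      have : A ≤ A.comap φ.toMonoidHom := by
        refine sup_le ?_ ?_
        · intro c hc
          show φ c ∈ A
          have hc' : φ c = c := hc
          rw [hc']; exact (le_sup_left : C ≤ A) hc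
        · rw [Subgroup.closure_le]
          rintro g (rfl | rfl)
          · show φ g ∈ A
            rw [hφx]; exact hyA
          · show φ g ∈ A
            rw [hφy]; exact A.inv_mem (A.mul_mem hxA hyA)
      exact fun a ha => this ha
    have h6 := h.relIndex_ge hAi (inv_fixC φ) hxA (fun h1 => hxC (h.fixed_of h1))
    have h7 : C.relIndex A * A.index = C.index := Subgroup.relIndex_mul_index le_sup_left
    rw [hC4] at h7
    have h8 : A.index = 1 := by
      have : A.index ≠ 0 := Subgroup.index_ne_zero_of_finite
      have h7 : 4 ≤ C.relIndex A := h6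
      nlinarith [Nat.pos_of_ne_zero this]
    rw [Subgroup.index_eq_one] at h8
    rw [eq_top_iff, ← h8]
    exact hAH

end

open KGen
open scoped commutatorElement

section
variable {G : Type*} [Group G]

/-- The elements commuting with all of `A` modulo the normal subgroup `N`. -/
def cz (N : Subgroup G) [N.Normal] (A : Subgroup G) : Subgroup G :=
  (Subgroup.centralizer (A.map (QuotientGroup.mk' N) : Set (G ⧸ N))).comap (QuotientGroup.mk' N)

theorem mem_cz {N : Subgroup G} [N.Normal] {A : Subgroup G} {x : G} :
    x ∈ cz N A ↔ ∀ y ∈ A, ⁅x, y⁆ ∈ N := by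
  rw [cz, Subgroup.mem_comap, Subgroup.mem_centralizer_iff]
  constructor
  · intro h y hy
    have h1 := h (QuotientGroup.mk' N y) ⟨y, hy, rfl⟩
    rw [← QuotientGroup.ker_mk' N, MonoidHom.mem_ker, map_commutatorElement,
      commutatorElement_eq_one_iff_mul_comm]
    exact h1.symm
  · rintro h _ ⟨y, hy, rfl⟩
    have h1 := h y hy
    rw [← QuotientGroup.ker_mk' N, MonoidHom.mem_ker, map_commutatorElement,
      commutatorElement_eq_one_iff_mul_comm] at h1
    exact h1.symm

theorem le_cz {N : Subgroup G} [N.Normal] {A B : Subgroup G} : B ≤ cz N A ↔ ⁅B, A⁆ ≤ N := by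
  rw [Subgroup.commutator_le]
  exact ⟨fun h b hb a ha => mem_cz.mp (h hb) a ha, fun h b hb => mem_cz.mpr (h b hb)⟩

theorem le_cz' {N : Subgroup G} [N.Normal] {A B : Subgroup G} : B ≤ cz N A ↔ ⁅A, B⁆ ≤ N := by
  rw [Subgroup.commutator_comm]; exact le_cz

theorem le_cz_symm {N : Subgroup G} [N.Normal] {A B : Subgroup G} (h : B ≤ cz N A) :
    A ≤ cz N B := le_cz'.mpr (le_cz.mp h)

theorem normal_of_between {A B : Subgroup G} (h1 : ⁅B, (⊤ : Subgroup G)⁆ ≤ A) (h2 : A ≤ B) :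
    A.Normal := by
  refine ⟨fun a ha g => ?_⟩
  have h3 : ⁅a, g⁆ ∈ A := h1 (Subgroup.commutator_mem_commutator (h2 ha) (Subgroup.mem_top g))
  have e : g * a * g⁻¹ = ⁅a, g⁆⁻¹ * a := by rw [commutatorElement_def]; group
  rw [e]
  exact A.mul_mem (A.inv_mem h3) ha

theorem comm_perturb {a g v w : G} (hv : ∀ x, Commute v x) (hw : Commute a w) :
    ⁅a * v, g * w⁆ = ⁅a, g⁆ := by
  have h1 : a * v * (g * w) * (a * v)⁻¹ = a * g * a⁻¹ * w := by
    have e2 : a * v * (g * w) * (a * v)⁻¹ = a * (v * (g * w) * v⁻¹) * a⁻¹ := by group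
    rw [e2, (hv (g * w)).mul_inv_cancel]
    have e3 : a * (g * w) * a⁻¹ = a * g * a⁻¹ * (a * w * a⁻¹) := by group
    rw [e3, hw.mul_inv_cancel]
  rw [commutatorElement_def, h1, commutatorElement_def]; group

theorem triv_step (φ : G ≃* G) {i : ℕ} (hv : ∀ u ∈ lc G i, u⁻¹ * φ u ∈ lc G (i + 1))
    (hQ : ⁅lc G i, movQ φ ⊤⁆ ≤ lc G (i + 2)) :
    ∀ u ∈ lc G (i + 1), u⁻¹ * φ u ∈ lc G (i + 2) := by
  let π := QuotientGroup.mk' (lc G (i + 2))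
  have hπ : ∀ x, π x = 1 ↔ x ∈ lc G (i + 2) := fun x => by
    rw [← MonoidHom.mem_ker, QuotientGroup.ker_mk']
  have key : lc G (i + 1) ≤ π.eqLocus (π.comp φ.toMonoidHom) := by
    rw [lc_succ, Subgroup.commutator_le]
    intro a ha g _
    show π ⁅a, g⁆ = π (φ ⁅a, g⁆)
    have e1 : φ a = a * (a⁻¹ * φ a) := by group
    have e2 : φ g = g * (g⁻¹ * φ g) := by group
    rw [map_commutatorElement φ, e1, e2]
    simp only [map_commutatorElement]
    rw [map_mul π a, map_mul π g, comm_perturb]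
    · intro x
      obtain ⟨x, rfl⟩ := QuotientGroup.mk'_surjective _ x
      have := comm_mem_lc (hv a ha) x
      rw [← hπ, map_commutatorElement, commutatorElement_eq_one_iff_mul_comm] at this
      exact this
    · have := hQ (Subgroup.commutator_mem_commutator ha (mem_movQ (Subgroup.mem_top g)))
      rw [← hπ, map_commutatorElement, commutatorElement_eq_one_iff_mul_comm] at this
      exact this
  intro u hu
  have h1 : π u = π (φ u) := key hu
  rw [← hπ, map_mul, map_inv, ← h1, inv_mul_cancel]

/-- Trivial action on the abelianization passes to all lower central factors. -/
theorem triv_all (φ : G ≃* G) (h0 : ∀ u : G, u⁻¹ * φ u ∈ lc G 1) (i : ℕ) :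
    ∀ u ∈ lc G i, u⁻¹ * φ u ∈ lc G (i + 1) := by
  have hQ : movQ φ ⊤ ≤ lc G 1 := movQ_le fun u _ => h0 u
  induction i with
  | zero => exact fun u _ => h0 u
  | succ i ih =>
    exact triv_step φ ih ((Subgroup.commutator_mono le_rfl hQ).trans (comm_lc' (by omega)))

theorem caseB_ind [Finite G] {φ : G ≃* G} {p : ℕ} (h : Cop φ p)
    (hCQ : ⁅fixC φ, movQ φ ⊤⁆ ≤ lc G 2) (h1 : ⁅lc G 1, movQ φ ⊤⁆ ≤ lc G 3)
    (ht : ∀ u ∈ lc G 1, u⁻¹ * φ u ∈ lc G 2) (i : ℕ) :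
    ⁅lc G (i + 1), movQ φ ⊤⁆ ≤ lc G (i + 3) ∧
      ∀ u ∈ lc G (i + 1), u⁻¹ * φ u ∈ lc G (i + 2) := by
  set Q := movQ φ ⊤ with hQ
  induction i with
  | zero => exact ⟨h1, ht⟩
  | succ i ih =>
    obtain ⟨ih1, ih2⟩ := ih
    refine ⟨?_, triv_step φ ih2 ih1⟩
    rw [lc_succ (i + 1)]
    have hb : ⁅⁅lc G (i + 1), Q⁆, (⊤ : Subgroup G)⁆ ≤ lc G (i + 4) :=
      Subgroup.commutator_mono ih1 le_rfl
    have hb' : ⁅⁅Q, lc G (i + 1)⁆, (⊤ : Subgroup G)⁆ ≤ lc G (i + 4) := by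
      rwa [Subgroup.commutator_comm Q]
    apply three_sub
    · have hle : ⁅(⊤ : Subgroup G), Q⁆ ≤ ⁅Q, Q⁆ ⊔ lc G 2 := by
        rw [← le_cz]
        intro g _
        obtain ⟨c, hc, q, hq, rfl⟩ := h.factor g
        refine Subgroup.mul_mem _ ?_ ?_
        · exact le_cz.mpr (hCQ.trans le_sup_right) hc
        · exact le_cz.mpr (le_sup_left : ⁅Q, Q⁆ ≤ ⁅Q, Q⁆ ⊔ lc G 2) hq
      rw [← le_cz]
      refine hle.trans (sup_le ?_ ?_)
      · rw [le_cz]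
        apply three_sub
        · exact (Subgroup.commutator_mono le_rfl le_top).trans hb'
        · exact (Subgroup.commutator_mono le_rfl le_top).trans hb
      · rw [le_cz]
        exact comm_lc' (by omega)
    · exact hb'.trans le_rfl

/-- Case A is impossible. -/
theorem caseA [Finite G] {φ : G ≃* G} {p : ℕ} (h : Cop φ p) (hfix : lc G 2 ≤ fixC φ)
    (h4 : (lc G 2).relIndex (lc G 1) ≤ 4) {u : G} (hu : u ∈ lc G 1) (hun : u⁻¹ * φ u ∉ lc G 2) :
    lc G 4 ≤ lc G 5 := by
  set Q := movQ φ ⊤ with hQ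
  set C := fixC φ with hC
  set N := movQ φ (lc G 1) with hN
  have hinv : ∀ i, PhiInv φ (lc G i) := fun i => inv_char φ _
  have hN1 : N ≤ lc G 1 := movQ_le fun u hu =>
    Subgroup.mul_mem _ (Subgroup.inv_mem _ hu) (hinv 1 _ hu)
  have hNQ : N ≤ Q := movQ_le fun u _ => mem_movQ (Subgroup.mem_top u)
  have ha : Q ≤ cz ⊥ (lc G 2) := by
    apply movQ_le
    intro g _
    rw [mem_cz]
    intro c hc
    rw [← commutatorElement_inv]
    apply Subgroup.inv_mem
    apply comm_of_fixed (hfix hc)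
    have : φ ⁅c, g⁆ = ⁅c, g⁆ := hfix (lc_anti (by omega) (comm_mem_lc hc g))
    rw [this, inv_mul_cancel]; exact Subgroup.one_mem _
  have hb : N ≤ cz ⊥ C := by
    apply movQ_le
    intro g hg
    rw [mem_cz]
    intro c hc
    rw [← commutatorElement_inv]
    apply Subgroup.inv_mem
    apply comm_of_fixed hc
    have : φ ⁅c, g⁆ = ⁅c, g⁆ := hfix (comm_mem_lc' hg c)
    rw [this, inv_mul_cancel]; exact Subgroup.one_mem _
  have hc : lc G 1 ≤ N ⊔ lc G 2 := by
    set E := N ⊔ lc G 2 with hE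
    have hE1 : E ≤ lc G 1 := sup_le hN1 (lc_anti (by omega))
    have hEinv : PhiInv φ E := by
      have : E ≤ E.comap φ.toMonoidHom := by
        apply sup_le
        · intro x hx
          exact (le_sup_left : N ≤ E) (inv_movQ (hinv 1) _ hx)
        · intro x hx
          exact (le_sup_right : lc G 2 ≤ E) (hinv 2 _ hx)
      exact fun x hx => this hx
    have h5 : p + 1 ≤ (lc G 2).relIndex E := by
      apply h.relIndex_ge hEinv (hinv 2) (u := u⁻¹ * φ u)
        ((le_sup_left : N ≤ E) (mem_movQ hu))
      intro h6
      exact hun (h.mem_of_trivial (hinv 2) h6)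
    have h6 := Subgroup.relIndex_mul_relIndex (lc G 2) E (lc G 1) le_sup_right hE1
    have h7 := h.three_le
    rw [← Subgroup.relIndex_eq_one]
    have h8 : E.relIndex (lc G 1) ≠ 0 := Subgroup.index_ne_zero_of_finite
    have h9 : 4 ≤ (lc G 2).relIndex E := by omega
    have h10 : E.relIndex (lc G 1) < 2 := by
      by_contra h11
      push Not at h11
      have := Nat.mul_le_mul h9 h11
      omega
    omega
  -- `[lc 1, N]` is central
  have hZ : ⁅lc G 1, N⁆ ≤ Subgroup.center G := by
    have h1 : N ≤ cz (Subgroup.center G) N := by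
      intro n hn
      rw [mem_cz]
      intro n' hn'
      rw [Subgroup.mem_center_iff]
      intro g
      obtain ⟨c, hc', q, hq, rfl⟩ := h.factor g
      have hcn : ∀ x ∈ N, Commute c x := by
        intro x hx
        have := mem_cz.mp (hb hx) c hc'
        rw [Subgroup.mem_bot, commutatorElement_eq_one_iff_mul_comm] at this
        exact this.symm
      have e1 : Commute c ⁅n, n'⁆ := by
        rw [commutatorElement_def]
        exact (((hcn n hn).mul_right (hcn n' hn')).mul_right (hcn n hn).inv_right).mul_right
          (hcn n' hn').inv_right
      have e2 : Commute q ⁅n, n'⁆ := by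
        have := mem_cz.mp (ha hq) ⁅n, n'⁆ (comm_mem_lc (hN1 hn) n')
        rw [Subgroup.mem_bot, commutatorElement_eq_one_iff_mul_comm] at this
        exact this
      exact (e1.mul_left e2).eq
    rw [← le_cz]
    refine hc.trans (sup_le h1 ?_)
    rw [le_cz']
    exact (le_cz.mp (hNQ.trans ha)).trans bot_le
  have hcz : ⁅⁅N, Q⁆, C⁆ ≤ Subgroup.center G := by
    apply three_sub
    · exact (Subgroup.commutator_mono (Subgroup.commutator_mono le_top le_top) le_rfl).trans hZ
    · rw [Subgroup.commutator_comm C N, le_bot_iff.mp (le_cz.mp hb)]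
      rw [Subgroup.commutator_bot_left]; exact bot_le
  have h2 : lc G 2 ≤ ⁅N, Q⁆ ⊔ lc G 3 := by
    set Y := ⁅N, Q⁆ ⊔ lc G 3 with hY
    have hNQ2 : ⁅N, Q⁆ ≤ lc G 2 := Subgroup.commutator_mono hN1 le_top
    have hYn : Y.Normal := normal_of_between (B := lc G 2) (le_sup_right : lc G 3 ≤ Y)
      (sup_le hNQ2 (lc_anti (by omega)))
    rw [lc_succ 1, ← le_cz]
    refine hc.trans (sup_le ?_ ?_)
    · apply le_cz_symm
      intro g _
      obtain ⟨c, hc', q, hq, rfl⟩ := h.factor g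
      refine Subgroup.mul_mem _ ?_ ?_
      · exact (le_cz'.mpr ((le_cz.mp hb).trans bot_le) : C ≤ cz Y N) hc'
      · exact (le_cz'.mpr le_sup_left : Q ≤ cz Y N) hq
    · rw [le_cz]; exact le_sup_right
  have h3 : lc G 3 ≤ Subgroup.center G ⊔ lc G 4 := by
    rw [lc_succ 2, ← le_cz]
    apply le_cz_symm
    intro g _
    obtain ⟨c, hc', q, hq, rfl⟩ := h.factor g
    refine Subgroup.mul_mem _ ?_ ?_
    · refine (le_cz_symm ?_ : C ≤ _) hc'
      refine h2.trans (sup_le ?_ ?_)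
      · rw [le_cz]; exact hcz.trans le_sup_left
      · rw [le_cz]
        exact (Subgroup.commutator_mono le_rfl le_top).trans le_sup_right
    · exact (le_cz.mpr ((le_cz.mp ha).trans bot_le) : Q ≤ _) hq
  rw [lc_succ 3, ← le_cz]
  refine h3.trans (sup_le ?_ ?_)
  · intro z hz
    rw [mem_cz]
    intro g _
    have : ⁅z, g⁆ = 1 := by
      rw [commutatorElement_eq_one_iff_mul_comm]
      exact (Subgroup.mem_center_iff.mp hz g).symm
    rw [this]; exact Subgroup.one_mem _
  · rw [le_cz]; exact le_rfl

end

open KGen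
open scoped commutatorElement

section
variable {G : Type*} [Group G] [Finite G] {φ : G ≃* G} {p : ℕ}

theorem Cop.index_mod (h : Cop φ p) {D : Subgroup G} (hD : PhiInv φ D) (hC : fixC φ ≤ D) :
    D.index ≡ 1 [MOD p] := by
  let f : G ⧸ D → G ⧸ D :=
    Quotient.map' (fun a => φ a) (by
      intro a b hab
      rw [QuotientGroup.leftRel_apply] at *
      have h2 := hD _ hab
      rwa [map_mul, map_inv] at h2)
  have hf : ∀ a : G, f (a : G ⧸ D) = ((φ a : G) : G ⧸ D) := fun a => rfl
  have hit : ∀ (k : ℕ) (a : G), f^[k] (a : G ⧸ D) = ((φ^[k] a : G) : G ⧸ D) := by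
    intro k
    induction k with
    | zero => intro a; rfl
    | succ k ih => intro a; rw [Function.iterate_succ_apply, Function.iterate_succ_apply, hf, ih]
  have h1 := fix_card h.prime f (by
    intro x
    induction x using QuotientGroup.induction_on with
    | H a => rw [hit, h.iter])
  have h2 : Nat.card {x // f x = x} = 1 := by
    rw [Nat.card_eq_one_iff_unique]
    refine ⟨⟨?_⟩, ⟨⟨((1 : G) : G ⧸ D), by rw [hf, map_one]⟩⟩⟩
    have key : ∀ x, f x = x → x = ((1 : G) : G ⧸ D) := by
      intro x
      induction x using QuotientGroup.induction_on with
      | H a =>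
        intro hx
        rw [hf] at hx
        have h3 : a⁻¹ * φ a ∈ D := QuotientGroup.eq.mp hx.symm
        obtain ⟨c, hc, hac⟩ := h.exists_fixed hD h3
        have h4 := D.mul_mem hac (D.inv_mem (hC hc))
        rw [mul_inv_cancel_right] at h4
        symm
        apply QuotientGroup.eq.mpr
        rw [inv_one, one_mul]
        exact (D.inv_mem_iff).mp h4
    rintro ⟨x, hx⟩ ⟨y, hy⟩
    exact Subtype.ext ((key x hx).trans (key y hy).symm)
  rw [h2] at h1
  exact h1

theorem of_mem_iff {g : G} : Abelianization.of g = 1 ↔ g ∈ lc G 1 := by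
  rw [← MonoidHom.mem_ker, Abelianization.ker_of]; rfl

theorem mem_D_iff {D : Subgroup G} (hD : lc G 1 ≤ D) {g : G} :
    Abelianization.of g ∈ D.map (Abelianization.of (G := G)) ↔ g ∈ D := by
  constructor
  · rintro ⟨d, hd, he⟩
    have h1 : Abelianization.of (d⁻¹ * g) = 1 := by rw [map_mul, map_inv, he, inv_mul_cancel]
    have h2 := D.mul_mem hd (hD (of_mem_iff.mp h1))
    rwa [mul_inv_cancel_left] at h2
  · exact fun h => ⟨g, h, rfl⟩

/-- The preparations in the case of small abelianization. -/
theorem caseB_prep {m : ℕ} (h : Cop φ 3) (hcard : Nat.card G = 2 ^ m) (hi : (lc G 1).index ≤ 8)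
    {g0 : G} (hg0 : g0⁻¹ * φ g0 ∉ lc G 1) :
    (lc G 1).relIndex (fixC φ) ≤ 2 ∧ ((lc G 1).index = 4 → fixC φ ≤ lc G 1) ∧
      (∀ w ∈ movQ φ ⊤, w ^ 2 ∈ lc G 1) ∧
      (∀ w ∈ movQ φ ⊤, w * φ w * φ (φ w) ∈ lc G 1) := by
  set C := fixC φ with hC
  set Q := movQ φ ⊤ with hQ
  have hinv : ∀ i, PhiInv φ (lc G i) := fun i => inv_char φ _
  set D := C ⊔ lc G 1 with hD
  have h1D : lc G 1 ≤ D := le_sup_right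
  have hCD : C ≤ D := le_sup_left
  have hDi : PhiInv φ D := by
    have : D ≤ D.comap φ.toMonoidHom := by
      apply sup_le
      · intro x hx
        exact hCD (inv_fixC φ _ hx)
      · intro x hx
        exact h1D (hinv 1 _ hx)
    exact fun x hx => this hx
  have hDt : ∀ d ∈ D, d⁻¹ * φ d ∈ lc G 1 := by
    intro d hd
    obtain ⟨c, hc, l, hl, rfl⟩ := Subgroup.mem_sup_of_normal_right.mp hd
    have : φ c = c := hc
    rw [map_mul, this]
    have e : (c * l)⁻¹ * (c * φ l) = l⁻¹ * φ l := by group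
    rw [e]
    exact Subgroup.mul_mem _ (Subgroup.inv_mem _ hl) (hinv 1 _ hl)
  have hDmod := h.index_mod hDi hCD
  have hDne : D.index ≠ 1 := by
    intro h1
    rw [Subgroup.index_eq_one] at h1
    exact hg0 (hDt g0 (h1 ▸ Subgroup.mem_top g0))
  have hmul := Subgroup.relIndex_mul_index h1D
  have hpow : ∀ k, 2 ^ k ≤ 8 → 2 ^ k ≡ 1 [MOD 3] → 2 ^ k = 1 ∨ 2 ^ k = 4 := by
    intro k hk hk3
    have : k ≤ 3 := by
      by_contra h4
      have := Nat.pow_le_pow_right (show 0 < 2 by norm_num) (show 4 ≤ k by omega)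
      omega
    interval_cases k
    · simp
    · exact absurd hk3 (by decide)
    · simp
    · exact absurd hk3 (by decide)
  have hrpos : 0 < (lc G 1).relIndex D := Nat.pos_of_ne_zero Subgroup.index_ne_zero_of_finite
  have hD4 : D.index = 4 := by
    obtain ⟨k, hk⟩ := index_pow_two hcard D
    rw [hk] at hDmod hDne hmul ⊢
    rcases hpow k (by nlinarith [Nat.two_pow_pos k]) hDmod with h1 | h1
    · exact absurd h1 hDne
    · exact h1
  rw [hD4] at hmul
  have hsq : ∀ g : G, g ^ 2 ∈ D := by
    let S : Subgroup G := ((D.map (Abelianization.of (G := G))).comap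
      (powMonoidHom 2)).comap Abelianization.of
    have hS : ∀ g, g ∈ S ↔ g ^ 2 ∈ D := by
      intro g
      rw [← mem_D_iff h1D, map_pow]
      rfl
    have hDS : D ≤ S := fun d hd => (hS d).mpr (D.pow_mem hd 2)
    have hSi : PhiInv φ S := by
      intro s hs
      rw [hS] at *
      rw [← map_pow]
      exact hDi _ hs
    have hSmod := h.index_mod hSi (hCD.trans hDS)
    have hmul2 := Subgroup.relIndex_mul_index hDS
    rw [hD4] at hmul2
    have hpos2 : 0 < D.relIndex S := Nat.pos_of_ne_zero Subgroup.index_ne_zero_of_finite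
    obtain ⟨k, hk⟩ := index_pow_two hcard S
    rw [hk] at hSmod hmul2
    have hn : Subgroup.Normal D := normal_of_between (B := ⊤) h1D le_top
    rcases hpow k (by nlinarith [Nat.two_pow_pos k]) hSmod with h1 | h1
    · rw [h1, Subgroup.index_eq_one] at hk
      intro g
      exact (hS g).mp (hk ▸ Subgroup.mem_top g)
    · have h5 : S ≤ D := by
        rw [← Subgroup.relIndex_eq_one]
        rw [h1] at hmul2; omega
      intro g
      apply h5
      rw [hS, ← pow_mul]
      have := D.pow_index_mem g
      rwa [hD4] at this
  have hrel : (lc G 1).relIndex C = (lc G 1).relIndex D := by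
    rw [hD, Subgroup.relIndex_sup_right]
  refine ⟨by omega, ?_, ?_, ?_⟩
  · intro h4
    rw [← Subgroup.relIndex_eq_one]
    omega
  · have key : Q ≤ ((powMonoidHom 2).comp (Abelianization.of (G := G))).ker := by
      apply movQ_le
      intro g _
      rw [MonoidHom.mem_ker]
      have h1 := of_mem_iff.mpr (hDt _ (hsq g))
      simp only [MonoidHom.comp_apply, powMonoidHom_apply, map_mul, map_inv, map_pow] at h1 ⊢
      exact h1
    intro w hw
    have := key hw
    rw [MonoidHom.mem_ker, MonoidHom.comp_apply, powMonoidHom_apply, ← map_pow,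
      of_mem_iff] at this
    exact this
  · let f0 := Abelianization.of (G := G)
    let f1 := f0.comp φ.toMonoidHom
    let f2 := f1.comp φ.toMonoidHom
    have hf : ∀ w, (f0 * f1 * f2) w = f0 (w * φ w * φ (φ w)) := by
      intro w
      rw [map_mul f0, map_mul f0]; rfl
    have key : Q ≤ (f0 * f1 * f2).ker := by
      apply movQ_le
      intro g _
      have h3 : φ (φ (φ g)) = g := h.iter g
      rw [MonoidHom.mem_ker, hf]
      simp only [map_mul, map_inv, h3]
      group
    intro w hw
    have := key hw
    rw [MonoidHom.mem_ker, hf] at this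
    exact of_mem_iff.mp this

end

open KGen
open scoped commutatorElement

section
variable {G : Type*} [Group G] [Finite G] {φ : G ≃* G} {p : ℕ}

theorem prop_aux {p q B X Y : Prop} (e : (B ↔ X) ↔ Y) :
    ((p ↔ X) ↔ (Y ↔ q)) ↔ ((p ↔ q) ↔ B) := by
  by_cases p <;> by_cases q <;> by_cases B <;> by_cases X <;> simp_all

set_option maxHeartbeats 1000000 in
theorem caseB {m : ℕ} (h : Cop φ 3) (hcard : Nat.card G = 2 ^ m) (hi : (lc G 1).index ≤ 8)
    (h2 : (lc G 2).relIndex (lc G 1) = 2)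
    {g0 : G} (hg0 : g0⁻¹ * φ g0 ∉ lc G 1) (i : ℕ) :
    ∀ u ∈ lc G (i + 1), u⁻¹ * φ u ∈ lc G (i + 2) := by
  obtain ⟨hC2, -, hsq, hprod⟩ := caseB_prep h hcard hi hg0
  have hinv : ∀ i, PhiInv φ (lc G i) := fun i => inv_char φ _
  have ht : ∀ u ∈ lc G 1, u⁻¹ * φ u ∈ lc G 2 := fun u hu =>
    h.triv_of_two (hinv 1) (hinv 2) h2.le hu
  have hQi : PhiInv φ (movQ φ ⊤) := inv_movQ (inv_top φ)
  set C := fixC φ with hC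
  set Q := movQ φ ⊤ with hQ
  have hcm : ∀ a b : G, ⁅a, b⁆ ∈ lc G 1 := fun a b => comm_mem_lc (i := 0) (Subgroup.mem_top a) b
  have hCQ : ⁅C, Q⁆ ≤ lc G 2 := by
    rw [← le_cz']
    apply movQ_le
    intro g _
    rw [mem_cz]
    intro c hc
    rw [← commutatorElement_inv]
    apply Subgroup.inv_mem
    exact comm_of_fixed hc (ht _ (hcm c g))
  refine (caseB_ind h hCQ ?_ ht i).2
  have hCC : ⁅C, C⁆ ≤ lc G 2 := by
    apply comm_le_of_relIndex_two (A := lc G 1 ⊓ C) (B := C)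
    · rwa [Subgroup.inf_relIndex_right]
    · exact Subgroup.commutator_mono inf_le_left le_top
  -- multiplication modulo `lc 2`
  have hmul : ∀ a ∈ lc G 1, ∀ b ∈ lc G 1, (a * b ∈ lc G 2 ↔ (a ∈ lc G 2 ↔ b ∈ lc G 2)) := by
    intro a ha b hb
    have := Subgroup.mul_mem_iff_of_index_two (H := (lc G 2).subgroupOf (lc G 1)) h2
      (a := ⟨a, ha⟩) (b := ⟨b, hb⟩)
    exact this
  have hφm : ∀ i a, φ a ∈ lc G i ↔ a ∈ lc G i := by
    intro i a
    refine ⟨fun h1 => ?_, hinv i a⟩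
    have h3 : φ (φ (φ a)) = a := h.iter a
    rw [← h3]
    exact hinv i _ (hinv i _ h1)
  have h3 : ∀ a, φ (φ (φ a)) = a := h.iter
  -- the form
  obtain ⟨P, hP⟩ : ∃ P : G → G → Prop, ∀ a b, P a b ↔ ⁅a, b⁆ ∈ lc G 2 := ⟨_, fun _ _ => Iff.rfl⟩
  have hPs : ∀ a b, P a b ↔ P b a := by
    intro a b
    rw [hP, hP, ← commutatorElement_inv, Subgroup.inv_mem_iff]
  have hPm : ∀ a b c, P (a * b) c ↔ (P a c ↔ P b c) := by
    intro a b c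
    have e : ⁅a * b, c⁆ = (a * ⁅b, c⁆ * a⁻¹) * ⁅a, c⁆ := by
      simp only [commutatorElement_def]; group
    have hn : (lc G 1).Normal := inferInstance
    have hn2 : (lc G 2).Normal := inferInstance
    rw [hP, hP, hP, e, hmul _ (hn.conj_mem _ (hcm b c) a) _ (hcm a c)]
    have e4 : a * ⁅b, c⁆ * a⁻¹ ∈ lc G 2 ↔ ⁅b, c⁆ ∈ lc G 2 := by
      refine ⟨fun h5 => ?_, fun h5 => hn2.conj_mem _ h5 a⟩
      have h6 := hn2.conj_mem _ h5 a⁻¹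
      have e5 : a⁻¹ * (a * ⁅b, c⁆ * a⁻¹) * a⁻¹⁻¹ = ⁅b, c⁆ := by group
      rwa [e5] at h6
    rw [e4]
    exact iff_comm
  have hPφ : ∀ a b, P (φ a) (φ b) ↔ P a b := by
    intro a b
    rw [hP, hP, ← map_commutatorElement, hφm]
  have hPt : ∀ a ∈ lc G 1, ∀ b, P a b := fun a ha b => (hP a b).mpr (comm_mem_lc ha b)
  have hPaa : ∀ a, P a a := fun a => by
    rw [hP, commutatorElement_self]; exact Subgroup.one_mem _
  have hPsum : ∀ a ∈ Q, ∀ b, ((P a b ↔ P (φ a) b) ↔ P (φ (φ a)) b) := by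
    intro a ha b
    rw [← hPm, ← hPm]
    exact hPt _ (hprod a ha) b
  have hpol : ∀ a ∈ Q, ∀ b ∈ Q,
      (P (a * b) (φ (a * b)) ↔ ((P a (φ a) ↔ P b (φ b)) ↔ P a b)) := by
    intro a ha b hb
    have e1 := hPsum b hb a
    have e2 : P b (φ a) ↔ P (φ (φ b)) a := by
      rw [← hPφ b, ← hPφ (φ b), h3]
    rw [map_mul, hPm, hPs a (φ a * φ b), hPs b (φ a * φ b), hPm, hPm, hPs (φ a) b,
      hPs (φ a) a, hPs (φ b) b]
    rw [e2, hPs a b]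
    exact prop_aux e1
  -- elements on which the quadratic form does not vanish
  have hx : ∃ x ∈ Q, ¬ P x (φ x) := by
    by_contra hcon
    push Not at hcon
    have hQQ : ⁅Q, Q⁆ ≤ lc G 2 := by
      rw [Subgroup.commutator_le]
      intro a ha b hb
      rw [← hP]
      have := (hpol a ha b hb).mp (hcon _ (Q.mul_mem ha hb))
      have e1 := hcon a ha
      have e2 := hcon b hb
      tauto
    have hle : lc G 1 ≤ lc G 2 := by
      have hCt : ∀ c ∈ C, ∀ g, P c g := by
        intro c hc g
        obtain ⟨c', hc', q, hq, rfl⟩ := h.factor g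
        rw [hPs, hPm, hPs c', hPs q]
        have e1 : P c c' := (hP _ _).mpr (hCC (Subgroup.commutator_mem_commutator hc hc'))
        have e2 : P c q := (hP _ _).mpr (hCQ (Subgroup.commutator_mem_commutator hc hq))
        tauto
      rw [lc_succ 0, Subgroup.commutator_le]
      intro a _ b _
      rw [← hP]
      obtain ⟨c, hc, q, hq, rfl⟩ := h.factor a
      obtain ⟨c', hc', q', hq', rfl⟩ := h.factor b
      have e1 := hCt c hc (c' * q')
      have e2 : P c' q := hCt c' hc' q
      have e3 : P q q' := (hP _ _).mpr (hQQ (Subgroup.commutator_mem_commutator hq hq'))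
      rw [hPm, hPs q, hPm, hPs q']
      tauto
    rw [Subgroup.relIndex_eq_one.mpr hle] at h2
    omega
  have hB : ∀ x ∈ Q, ¬ P x (φ x) → x ∈ cz (lc G 3) (lc G 1) := by
    intro x hx hPx
    have hx2 : x ^ 2 ∉ lc G 2 := by
      intro hx2
      apply hPx
      rw [hP]
      let π := QuotientGroup.mk' (lc G 2)
      have hπ : ∀ x, π x = 1 ↔ x ∈ lc G 2 := fun x => by
        rw [← MonoidHom.mem_ker, QuotientGroup.ker_mk']
      have hu := hprod x hx
      set y := φ x with hy
      set z := φ y with hz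
      set u := x * y * z with hud
      have hy2 : y ^ 2 ∈ lc G 2 := by rw [hy, ← map_pow]; exact hinv 2 _ hx2
      have hz2 : z ^ 2 ∈ lc G 2 := by rw [hz, ← map_pow]; exact hinv 2 _ hy2
      have hu2 : u ^ 2 ∈ lc G 2 := by
        rw [pow_two, hmul u hu u hu]
      have huz : Commute (π u) (π z) := by
        have := comm_mem_lc hu z
        rw [← hπ, map_commutatorElement, commutatorElement_eq_one_iff_mul_comm] at this
        exact this
      rw [← hπ] at hx2 hy2 hz2 hu2 ⊢
      rw [map_pow] at hx2 hy2 hz2 hu2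
      have e1 : π x * π y = π u * (π z)⁻¹ := by
        rw [hud, map_mul, map_mul, mul_inv_cancel_right]
      have e2 : (π x * π y) ^ 2 = 1 := by
        rw [e1, huz.inv_right.mul_pow, inv_pow, hu2, hz2, inv_one, one_mul]
      have ex : (π x)⁻¹ = π x := by
        rw [inv_eq_iff_mul_eq_one, ← pow_two, hx2]
      have ey : (π y)⁻¹ = π y := by
        rw [inv_eq_iff_mul_eq_one, ← pow_two, hy2]
      rw [map_commutatorElement, commutatorElement_def, ex, ey, ← e2, pow_two, mul_assoc (π x * π y)]
    rw [mem_cz]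
    intro l hl
    by_cases hl2 : l ∈ lc G 2
    · exact comm_mem_lc' hl2 x
    · have h4 : l * x ^ 2 ∈ lc G 2 := by
        rw [hmul l hl _ (hsq x hx)]; tauto
      have h5 := comm_mem_lc' h4 x
      have e : ⁅x, l * x ^ 2⁆ = ⁅x, l⁆ := by
        simp only [commutatorElement_def, pow_two]; group
      rwa [e] at h5
  rw [← le_cz']
  obtain ⟨x, hxQ, hx⟩ := hx
  have hQB : ∀ x ∈ Q, ¬ P x (φ x) → ∀ y ∈ Q, P x y → y ∈ cz (lc G 3) (lc G 1) := by
    intro x hxQ hx y hy hxy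
    by_cases hy1 : P y (φ y)
    · have h4 : x * y ∈ cz (lc G 3) (lc G 1) := by
        apply hB _ (Q.mul_mem hxQ hy)
        rw [hpol x hxQ y hy]; tauto
      have := Subgroup.mul_mem _ (Subgroup.inv_mem _ (hB x hxQ hx)) h4
      rwa [inv_mul_cancel_left] at this
    · exact hB y hy hy1
  intro y hy
  by_cases h4 : P x y
  · exact hQB x hxQ hx y hy h4
  · by_cases h5 : P (φ x) y
    · exact hQB (φ x) (hQi _ hxQ) (by rwa [hPφ]) y hy h5
    · exact hQB (φ (φ x)) (hQi _ (hQi _ hxQ)) (by rwa [hPφ, hPφ]) y hy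
        ((hPsum x hxQ y).mp (by tauto))

/-- With abelianization of order four the second lower central factor has order two. -/
theorem rel_two_of_four {m : ℕ} (h : Cop φ 3) (hcard : Nat.card G = 2 ^ m)
    (hi : (lc G 1).index = 4) (hn : ¬ lc G 1 ≤ lc G 2)
    {g0 : G} (hg0 : g0⁻¹ * φ g0 ∉ lc G 1) : (lc G 2).relIndex (lc G 1) = 2 := by
  obtain ⟨-, hC, hsq, hprod⟩ := caseB_prep h hcard (by omega) hg0
  have hC := hC hi
  have hinv : ∀ i, PhiInv φ (lc G i) := fun i => inv_char φ _
  set x := g0⁻¹ * φ g0 with hx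
  have hxQ : x ∈ movQ φ ⊤ := mem_movQ (Subgroup.mem_top g0)
  have hxy : x⁻¹ * φ x ∉ lc G 1 := fun h1 => hg0 (h.mem_of_trivial (hinv 1) h1)
  clear_value x
  set κ := ⁅x, φ x⁆ with hκ
  have hgen : ∀ A : Subgroup G, lc G 1 ≤ A → x ∈ A → φ x ∈ A → A = ⊤ := by
    intro A h1 h2 h3
    have h4 := Subgroup.relIndex_mul_index h1
    obtain ⟨k, hk⟩ := relIndex_pow_two hcard (lc G 1) A
    rw [← Subgroup.index_eq_one]
    have h5 : (lc G 1).relIndex A ≠ 1 := by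
      intro h6
      exact hg0 (Subgroup.relIndex_eq_one.mp h6 h2)
    have h6 : (lc G 1).relIndex A ≠ 2 := by
      intro h6
      have hy : φ x ∉ lc G 1 := by
        intro h7
        apply hg0
        have h3 : φ (φ (φ x)) = x := h.iter x
        rw [← h3]
        exact hinv 1 _ (hinv 1 _ h7)
      have := Subgroup.mul_mem_iff_of_index_two (H := (lc G 1).subgroupOf A) h6
        (a := ⟨x⁻¹, A.inv_mem h2⟩) (b := ⟨φ x, h3⟩)
      have h8 : x⁻¹ * φ x ∈ lc G 1 ↔ (x⁻¹ ∈ lc G 1 ↔ φ x ∈ lc G 1) := this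
      rw [Subgroup.inv_mem_iff] at h8
      tauto
    rw [hk] at h4 h5 h6
    rw [hi] at h4
    have hk2 : 2 ≤ k := by
      by_contra h7
      have : k = 0 ∨ k = 1 := by omega
      rcases this with rfl | rfl <;> simp at h5 h6
    have h7 := Nat.pow_le_pow_right (show 0 < 2 by norm_num) hk2
    have h8 : A.index ≠ 0 := Subgroup.index_ne_zero_of_finite
    have h9 : A.index < 2 := by
      by_contra h10
      push Not at h10
      have := Nat.mul_le_mul h7 h10
      omega
    omega
  have hκ1 : κ ∈ lc G 1 := comm_mem_lc (i := 0) (Subgroup.mem_top x) _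
  have hκ2 : κ * κ ∈ lc G 2 := by
    have e : κ * κ = ⁅x, κ⁆⁻¹ * ⁅x ^ 2, φ x⁆ := by
      rw [hκ]; simp only [commutatorElement_def, pow_two]; group
    rw [e]
    exact Subgroup.mul_mem _ (Subgroup.inv_mem _ (comm_mem_lc' hκ1 x))
      (comm_mem_lc (hsq x hxQ) _)
  let T := Subgroup.zpowers κ ⊔ lc G 2
  have hT1 : T ≤ lc G 1 := sup_le ((Subgroup.zpowers_le).mpr hκ1) (lc_anti (by omega))
  have hTn : T.Normal := normal_of_between (B := lc G 1) (le_sup_right : lc G 2 ≤ T) hT1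
  have hκT : κ ∈ T := (le_sup_left : _ ≤ T) (Subgroup.mem_zpowers κ)
  have hl : ∀ l ∈ lc G 1, ∀ g : G, ⁅l, g⁆ ∈ T := fun l hl g =>
    (le_sup_right : lc G 2 ≤ T) (comm_mem_lc hl g)
  have hswap : ∀ a b : G, ⁅a, b⁆ ∈ T → ⁅b, a⁆ ∈ T := fun a b h1 => by
    rw [← commutatorElement_inv]; exact T.inv_mem h1
  have hone : ∀ z : G, ⁅x, z⁆ ∈ T → ⁅φ x, z⁆ ∈ T → ∀ g : G, ⁅g, z⁆ ∈ T := by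
    intro z h1 h2 g
    have h3 : cz T (Subgroup.zpowers z) = ⊤ := by
      have hz : ∀ a : G, ⁅a, z⁆ ∈ T → a ∈ cz T (Subgroup.zpowers z) := by
        intro a ha
        have h4 : Subgroup.zpowers z ≤ cz T (Subgroup.zpowers a) := by
          rw [Subgroup.zpowers_le]
          have h5 : Subgroup.zpowers a ≤ cz T (Subgroup.zpowers z) := by
            rw [Subgroup.zpowers_le, mem_cz]
            rintro _ ⟨k, rfl⟩
            have h6 : QuotientGroup.mk' T ⁅a, z⁆ = 1 := by
              rwa [← MonoidHom.mem_ker, QuotientGroup.ker_mk']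
            rw [map_commutatorElement, commutatorElement_eq_one_iff_mul_comm] at h6
            have h7 : Commute (QuotientGroup.mk' T a) (QuotientGroup.mk' T z) := h6
            rw [← QuotientGroup.ker_mk' T, MonoidHom.mem_ker, map_commutatorElement,
              commutatorElement_eq_one_iff_mul_comm]
            simp only [map_zpow]
            exact (h7.zpow_right k).eq
          exact le_cz_symm h5 (Subgroup.mem_zpowers z)
        exact le_cz_symm h4 (Subgroup.mem_zpowers a)
      exact hgen _ (fun l hl' => hz l (hl l hl' z)) (hz x h1) (hz _ h2)
    have h4 : g ∈ cz T (Subgroup.zpowers z) := h3 ▸ Subgroup.mem_top g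
    exact mem_cz.mp h4 z (Subgroup.mem_zpowers z)
  have h1T : lc G 1 ≤ T := by
    rw [lc_succ 0, Subgroup.commutator_le]
    intro a _ b _
    have hs : ∀ z : G, ⁅z, z⁆ ∈ T := fun z => by
      rw [commutatorElement_self]; exact T.one_mem
    apply hone b
    · exact hswap _ _ (hone x (hs x) (hswap x (φ x) hκT) b)
    · exact hswap _ _ (hone (φ x) hκT (hs _) b)
  have hκn : κ ∉ lc G 2 := by
    intro h1
    apply hn
    exact h1T.trans (sup_le ((Subgroup.zpowers_le).mpr h1) le_rfl)
  have key : ∀ l ∈ lc G 1, l ∈ lc G 2 ∨ l * κ ∈ lc G 2 := by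
    intro l hl
    obtain ⟨a, ha, b, hb, rfl⟩ := Subgroup.mem_sup_of_normal_right.mp (h1T hl)
    obtain ⟨k, rfl⟩ := ha
    simp only
    have hn2 : (lc G 2).Normal := inferInstance
    have hkk : ∀ j : ℤ, κ ^ (2 * j) ∈ lc G 2 := by
      intro j
      rw [zpow_mul]
      exact Subgroup.zpow_mem _ (by rw [zpow_two]; exact hκ2) j
    rcases Int.even_or_odd' k with ⟨j, rfl | rfl⟩
    · exact Or.inl (Subgroup.mul_mem _ (hkk j) hb)
    · right
      have e : κ ^ (2 * j + 1) * b * κ = κ ^ (2 * j) * ((κ * b * κ⁻¹) * (κ * κ)) := by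
        rw [zpow_add, zpow_one]; group
      rw [e]
      exact Subgroup.mul_mem _ (hkk j) (Subgroup.mul_mem _ (hn2.conj_mem _ hb _) hκ2)
  rw [Subgroup.relIndex, Subgroup.index_eq_two_iff]
  refine ⟨⟨κ, hκ1⟩, ?_⟩
  rintro ⟨l, hl⟩
  show Xor (l * κ ∈ lc G 2) (l ∈ lc G 2)
  rcases key l hl with h1 | h1
  · refine Or.inr ⟨h1, fun h2 => hκn ?_⟩
    have := Subgroup.mul_mem _ (Subgroup.inv_mem _ h1) h2
    rwa [inv_mul_cancel_left] at this
  · refine Or.inl ⟨h1, fun h2 => hκn ?_⟩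
    have := Subgroup.mul_mem _ (Subgroup.inv_mem _ h2) h1
    rwa [inv_mul_cancel_left] at this

end

open KGen
open scoped commutatorElement

theorem main_of_cop {G : Type*} [Group G] [Finite G] [Group.IsNilpotent G] {m : ℕ} (hm : 8 ≤ m)
    (hcard : Nat.card G = 2 ^ m) (hclass : Group.nilpotencyClass G = m - 3)
    {φ : G ≃* G} {p : ℕ} (h : Cop φ p) (hφ : ∃ g, φ g ≠ g) : KConcl G (m - 6) := by
  obtain ⟨e, hrel, hpos, he0, he1, he2, hbot⟩ := cc_data hm hcard hclass
  have hinv : ∀ i, PhiInv φ (lc G i) := fun i => inv_char φ _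
  have hidx : (lc G 1).index = 2 ^ e 0 := by
    rw [← hrel 0]; exact (Subgroup.relIndex_top_right _).symm
  have hnle : ∀ i, i < m - 3 → ¬ lc G i ≤ lc G (i + 1) := by
    intro i hi hle
    have h1 := hrel i
    rw [Subgroup.relIndex_eq_one.mpr hle] at h1
    have h2 := hpos i hi
    have h3 := Nat.pow_le_pow_right (show 0 < 2 by norm_num) h2
    omega
  have hT : lc G 1 ≤ fixC φ → KConcl G (m - 6) := by
    intro hfix
    refine caseT h (by rw [hcard]; congr 1; omega) hφ hfix ?_ ?_ (hnle 2 (by omega))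
    · rw [hidx]
      exact Nat.pow_le_pow_right (show 0 < 2 by norm_num) he0
    · intro h16
      rw [hidx] at h16
      have h4 : e 0 = 4 := Nat.pow_right_injective (le_refl 2) (by simpa using h16)
      have h5 := he1 1 le_rfl (by omega)
      have h6 := hpos 1 (by omega)
      have h7 : e 1 = 1 := by omega
      rw [hrel 1, h7, pow_one]
  have htwo : ∀ i, e i ≤ 1 → ∀ u ∈ lc G i, u⁻¹ * φ u ∈ lc G (i + 1) := by
    intro i hi u hu
    refine h.triv_of_two (hinv i) (hinv (i + 1)) ?_ hu
    rw [hrel i]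
    exact Nat.pow_le_pow_right (show 0 < 2 by norm_num) hi
  have hthree : ∀ i, e i ≤ 2 → ∀ u ∈ lc G i, u⁻¹ * φ u ∉ lc G (i + 1) → p = 3 := by
    intro i hi u hu hn
    refine h.eq_three (hinv i) (hinv (i + 1)) ?_ hu hn
    rw [hrel i]
    exact Nat.pow_le_pow_right (show 0 < 2 by norm_num) hi
  obtain ⟨g0, hg0⟩ : ∃ g : G, g⁻¹ * φ g ∉ lc G 1 := by
    by_contra hcon
    push Not at hcon
    obtain ⟨g, hg⟩ := hφ
    exact hg (h.fixes_lc hbot 0 (fun i _ _ => triv_all φ hcon i) (Subgroup.mem_top g))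
  have he0' : 2 ≤ e 0 := by
    by_contra h1
    exact hg0 (htwo 0 (by omega) g0 (Subgroup.mem_top g0))
  have hBT : p = 3 → e 0 ≤ 3 → (lc G 2).relIndex (lc G 1) = 2 → KConcl G (m - 6) := by
    intro hp h03 h12
    subst hp
    apply hT
    apply h.fixes_lc hbot 1
    intro i hi1 _
    obtain ⟨j, rfl⟩ := Nat.exists_eq_add_of_le' hi1
    refine caseB h hcard ?_ h12 hg0 j
    rw [hidx]
    exact Nat.pow_le_pow_right (show 0 < 2 by norm_num) h03
  have hcases : e 0 = 2 ∨ e 0 = 3 ∨ e 0 = 4 := by omega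
  rcases hcases with h0 | h0 | h0
  · have hp := hthree 0 (by omega) g0 (Subgroup.mem_top g0) hg0
    apply hBT hp (by omega)
    subst hp
    exact rel_two_of_four h hcard (by rw [hidx, h0]; norm_num) (hnle 1 (by omega)) hg0
  · by_cases hA : ∃ u ∈ lc G 1, u⁻¹ * φ u ∉ lc G 2
    · exfalso
      obtain ⟨u, hu, hun⟩ := hA
      have h1 : ¬ e 1 ≤ 1 := fun h1 => hun (htwo 1 h1 u hu)
      have hfix : lc G 2 ≤ fixC φ := by
        apply h.fixes_lc hbot 2
        intro i hi1 hi2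
        apply htwo i
        have := he2 1 i le_rfl (by omega) hi2
        omega
      refine hnle 4 (by omega) (caseA h hfix ?_ hu hun)
      rw [hrel 1]
      have := he1 1 le_rfl (by omega)
      exact Nat.pow_le_pow_right (show 0 < 2 by norm_num) (show e 1 ≤ 2 by omega)
    · push Not at hA
      by_cases h1 : e 1 = 1
      · by_cases hall : ∀ i, 1 ≤ i → i < m - 3 → ∀ u ∈ lc G i, u⁻¹ * φ u ∈ lc G (i + 1)
        · exact hT (h.fixes_lc hbot 1 hall)
        · push Not at hall
          obtain ⟨i, hi1, hi2, u, hu, hun⟩ := hall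
          have := he1 i hi1 hi2
          exact hBT (hthree i (by omega) u hu hun) (by omega) (by rw [hrel 1, h1, pow_one])
      · apply hT
        apply h.fixes_lc hbot 1
        intro i hi1 hi2
        by_cases hi : i = 1
        · subst hi; exact hA
        · apply htwo i
          have h3 := he2 1 i le_rfl (by omega) hi2
          have h4 := hpos 1 (by omega)
          omega
  · apply hT
    apply h.fixes_lc hbot 1
    intro i hi1 hi2
    apply htwo i
    have := he1 i hi1 hi2
    omega

theorem exists_cop {G : Type*} [Group G] [Finite G] {m : ℕ}
    (hcard : Nat.card G = 2 ^ m) (haut : ¬ IsPGroup 2 (MulAut G)) :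
    ∃ (φ : G ≃* G) (p : ℕ), Cop φ p ∧ ∃ g, φ g ≠ g := by
  have : Fact (Nat.Prime 2) := ⟨Nat.prime_two⟩
  have hfin : Finite (MulAut G) := inferInstance
  obtain ⟨p, hp, hpd, hp2⟩ : ∃ p, Nat.Prime p ∧ p ∣ Nat.card (MulAut G) ∧ p ≠ 2 := by
    by_contra hcon
    push Not at hcon
    apply haut
    rw [IsPGroup.iff_card]
    exact ⟨_, Nat.eq_prime_pow_of_unique_prime_dvd Nat.card_pos.ne'
      (fun {d} hd hdd => hcon d hd hdd)⟩
  have : Fact p.Prime := ⟨hp⟩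
  obtain ⟨φ, hφ⟩ := exists_prime_orderOf_dvd_card' p hpd
  refine ⟨φ, p, ⟨⟨m, hcard⟩, hp, hp2, ?_⟩, ?_⟩
  · intro g
    have h1 : φ ^ p = 1 := by rw [← hφ]; exact pow_orderOf_eq_one φ
    have h2 : ∀ (k : ℕ) (x : G), φ^[k] x = (φ ^ k) x := by
      intro k
      induction k with
      | zero => intro x; rfl
      | succ k ih => intro x; rw [Function.iterate_succ_apply, ih, pow_succ]; rfl
    rw [h2, h1]; rfl
  · by_contra hcon
    push Not at hcon
    have h1 : φ = 1 := MulEquiv.ext hcon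
    rw [h1, orderOf_one] at hφ
    exact hp.one_lt.ne hφ

/-- If `G` is a finite `2`-group of order `2 ^ m` with `m ≥ 8` and coclass `3`
(nilpotency class `m - 3`) whose automorphism group is not a `2`-group, then `G` is
isomorphic to `K_{m-6}^i` for some `i ∈ {1, 2, 3, 4, 5, 6}`. -/
theorem coclass_three_aut_not_pGroup_classification
    {G : Type*} [Group G] [Finite G] [Group.IsNilpotent G] {m : ℕ} (hm : 8 ≤ m)
    (hcard : Nat.card G = 2 ^ m) (hclass : Group.nilpotencyClass G = m - 3)
    (haut : ¬ IsPGroup 2 (MulAut G)) :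
    Nonempty (G ≃* K1 (m - 6)) ∨ Nonempty (G ≃* K2 (m - 6)) ∨
      Nonempty (G ≃* K3 (m - 6)) ∨ Nonempty (G ≃* K4 (m - 6)) ∨
      Nonempty (G ≃* K5 (m - 6)) ∨ Nonempty (G ≃* K6 (m - 6)) := by
  obtain ⟨φ, p, h, hφ⟩ := exists_cop hcard haut
  exact main_of_cop hm hcard hclass h hφ
end

section
/- Let G be a finite group of order 2^n with n ≥ 4 and nilpotency class n − 1 (i.e., G is a 2-group of maximal class, equivalently of coclass 1, and order at least 2^4). Then the automorphism group Aut(G) is a 2-group. -/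
namespace CoclassOne

open Subgroup
open scoped commutatorElement

/-- A relative index at most two: quotients of elements outside `H` lie in `H`. -/
theorem two_step {G : Type*} [Group G] [Finite G] {H K : Subgroup G} (h : H.relIndex K ≤ 2)
    {x y : G} (hx : x ∈ K) (hy : y ∈ K) (hxH : x ∉ H) (hyH : y ∉ H) : x⁻¹ * y ∈ H := by
  have h0 : H.relIndex K ≠ 0 := Subgroup.index_ne_zero_of_finite
  have h1 : H.relIndex K ≠ 1 := fun h1 => hxH (Subgroup.relIndex_eq_one.1 h1 hx)
  have h2 : (H.subgroupOf K).index = 2 := by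
    change H.relIndex K = 2
    omega
  have := (Subgroup.mul_mem_iff_of_index_two h2 (a := (⟨x, hx⟩ : K)⁻¹) (b := ⟨y, hy⟩)).2
    (by simp [mem_subgroupOf, hxH, hyH])
  simpa [mem_subgroupOf] using this

/-- If an automorphism fixes `H` pointwise then its `|G|`-th power fixes `K` pointwise. -/
theorem fix_step {G : Type*} [Group G] [Finite G] {H K : Subgroup G} [K.Characteristic]
    (h : H.relIndex K ≤ 2) (φ : MulAut G) (hφ : ∀ x ∈ H, φ x = x) :
    ∀ x ∈ K, (φ ^ Nat.card G) x = x := by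
  intro x hx
  by_cases hxH : x ∈ H
  · have : ∀ j : ℕ, (φ ^ j) x = x := by
      intro j
      induction j with
      | zero => simp
      | succ j ih => rw [pow_succ, MulAut.mul_apply, hφ x hxH, ih]
    exact this _
  · have hφK : φ x ∈ K := by
      have := characteristic_iff_le_comap.1 (inferInstance : K.Characteristic) φ hx
      simpa using this
    have hφH : φ x ∉ H := fun hh => hxH (by
      have := φ.injective (hφ _ hh)
      rwa [this] at hh)
    have hz := two_step h hx hφK hxH hφH
    set z := x⁻¹ * φ x with hzdef
    have hx' : φ x = x * z := by simp [hzdef]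
    have hj : ∀ j : ℕ, (φ ^ j) x = x * z ^ j := by
      intro j
      induction j with
      | zero => simp
      | succ j ih =>
        rw [pow_succ', MulAut.mul_apply, ih, map_mul, map_pow, hφ z hz, hx', pow_succ', mul_assoc]
    rw [hj, pow_card_eq_one', mul_one]

theorem comm_mem {G : Type*} [Group G] {N M : Subgroup G} [M.Normal]
    (hN : ∀ x y : G, x ∉ N → y ∉ N → x⁻¹ * y ∈ N)
    (hNM : ∀ c ∈ N, ∀ g : G, ⁅c, g⁆ ∈ M) (x y : G) : ⁅x, y⁆ ∈ M := by
  by_cases hx : x ∈ N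
  · exact hNM x hx y
  by_cases hy : y ∈ N
  · rw [← commutatorElement_inv]
    exact M.inv_mem (hNM y hy x)
  have hz := hNM _ (hN x y hx hy) x
  have h2 := ‹M.Normal›.conj_mem _ (M.inv_mem hz) x
  convert h2 using 1
  simp only [commutatorElement_def]
  group

theorem card_mul_relIndex {G : Type*} [Group G] {H K : Subgroup G} (h : H ≤ K) :
    Nat.card H * H.relIndex K = Nat.card K := by
  have := relIndex_mul_relIndex ⊥ H K bot_le h
  simpa [relIndex_bot_left] using this

/-- `G` has a chain of characteristic subgroups with factors of order two. -/
theorem main {G : Type*} [Group G] [Finite G] [Group.IsNilpotent G] {n : ℕ} (hn : 4 ≤ n)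
    (hcard : Nat.card G = 2 ^ n) (hclass : Group.nilpotencyClass G = n - 1) :
    IsPGroup 2 (MulAut G) := by
  obtain ⟨m, rfl⟩ : ∃ m, n = m + 4 := ⟨n - 4, by omega⟩
  have hclass : Group.nilpotencyClass G = m + 3 := by omega
  set γ : ℕ → Subgroup G := (⊤ : Subgroup G).lowerCentralSeries with hγ
  have hanti : Antitone γ := Subgroup.lowerCentralSeries_antitone _
  have hbot : ∀ i, γ i = ⊥ ↔ m + 3 ≤ i := fun i => by
    rw [hγ, Subgroup.lowerCentralSeries_eq_bot_iff_nilpotencyClass_le, hclass]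
  have hchar : ∀ i, (γ i).Characteristic := fun i => by rw [hγ]; infer_instance
  have hsucc : ∀ i, γ (i + 1) = ⁅γ i, ⊤⁆ := fun i => rfl
  have hcomm : ∀ i, ∀ c ∈ γ i, ∀ g : G, ⁅c, g⁆ ∈ γ (i + 1) := fun i c hc g =>
    commutator_mem_commutator hc (mem_top g)
  have hne : ∀ i, i < m + 3 → γ (i + 1) ≠ γ i := by
    intro i hi heq
    have hall : ∀ j, γ (i + j) = γ i := by
      intro j
      induction j with
      | zero => rfl
      | succ j ih => rw [← add_assoc, hsucc, ih, ← hsucc, heq]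
    have := hall (m + 3)
    rw [(hbot _).2 (by omega)] at this
    have := (hbot i).1 this.symm
    omega
  have hrel2 : ∀ i, i < m + 3 → 2 ≤ (γ (i + 1)).relIndex (γ i) := by
    intro i hi
    have h0 : (γ (i + 1)).relIndex (γ i) ≠ 0 := Subgroup.index_ne_zero_of_finite
    have h1 : (γ (i + 1)).relIndex (γ i) ≠ 1 := fun h1 =>
      hne i hi (le_antisymm (hanti (Nat.le_succ i)) (relIndex_eq_one.1 h1))
    omega
  have hmul : ∀ i, Nat.card (γ (i + 1)) * (γ (i + 1)).relIndex (γ i) = Nat.card (γ i) :=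
    fun i => card_mul_relIndex (hanti (Nat.le_succ i))
  have hdouble : ∀ i, i < m + 3 → 2 * Nat.card (γ (i + 1)) ≤ Nat.card (γ i) := by
    intro i hi
    rw [← hmul i, mul_comm]
    exact Nat.mul_le_mul_left _ (hrel2 i hi)
  have hlow : ∀ j i, i + j = m + 3 → 2 ^ j ≤ Nat.card (γ i) := by
    intro j
    induction j with
    | zero => intro i _; exact Nat.card_pos
    | succ j ih =>
      intro i hi
      have := ih (i + 1) (by omega)
      have := hdouble i (by omega)
      rw [pow_succ]
      omega
  -- the derived subgroup has index at least four
  have hidx3 : 2 < (γ 1).index := by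
    by_contra hle
    have hrel : (γ 1).relIndex ⊤ ≤ 2 := by rw [relIndex_top_right]; omega
    have := hchar 2
    have hall : ∀ x y : G, ⁅x, y⁆ ∈ γ 2 := comm_mem (N := γ 1)
      (fun x y hx hy => two_step hrel (mem_top x) (mem_top y) hx hy) (hcomm 1)
    have hle : γ 1 ≤ γ 2 := by
      rw [show γ 1 = ⁅(⊤ : Subgroup G), ⊤⁆ from rfl, commutator_le]
      intro x _ y _
      exact hall x y
    exact hne 1 (by omega) (le_antisymm (hanti (by omega)) hle)
  have hidx : (γ 1).index = 4 ∧ Nat.card (γ 1) = 2 ^ (m + 2) := by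
    have hc := (γ 1).card_mul_index
    rw [hcard] at hc
    have hl := hlow (m + 2) 1 (by omega)
    obtain ⟨k, hk, hk'⟩ := (Nat.dvd_prime_pow Nat.prime_two).1 (Dvd.intro_left _ hc)
    have hk2 : 2 ≤ k := by
      by_contra hlt
      have : k = 0 ∨ k = 1 := by omega
      rcases this with rfl | rfl
      · rw [pow_zero] at hk'
        omega
      · rw [pow_one] at hk'
        omega
    have h4 : (γ 1).index ≤ 4 := by
      by_contra hlt
      have : 2 ^ (m + 2) * 4 < Nat.card (γ 1) * (γ 1).index :=
        Nat.mul_lt_mul_of_le_of_lt hl (by omega) Nat.card_pos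
      rw [hc, pow_add 2 m 4, pow_add 2 m 2] at this
      omega
    have h4' : 2 ^ 2 ≤ (γ 1).index := hk' ▸ Nat.pow_le_pow_right (by omega) hk2
    have h4'' : (γ 1).index = 4 := by omega
    refine ⟨h4'', ?_⟩
    rw [h4'', pow_add 2 m 4] at hc
    rw [pow_add 2 m 2]
    omega
  have hup : ∀ j, j ≤ m + 2 → 2 ^ j * Nat.card (γ (1 + j)) ≤ 2 ^ (m + 2) := by
    intro j
    induction j with
    | zero => intro _; simp [hidx.2]
    | succ j ih =>
      intro hj
      have h1 := ih (by omega)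
      have h2 := hdouble (1 + j) (by omega)
      calc 2 ^ (j + 1) * Nat.card (γ (1 + (j + 1)))
          = 2 ^ j * (2 * Nat.card (γ (1 + j + 1))) := by rw [pow_succ, mul_assoc]; rfl
        _ ≤ 2 ^ j * Nat.card (γ (1 + j)) := Nat.mul_le_mul_left _ h2
        _ ≤ _ := h1
  have hcards : ∀ j k, j + k = m + 2 → Nat.card (γ (1 + j)) = 2 ^ k := by
    intro j k hjk
    apply le_antisymm
    · have := hup j (by omega)
      rw [← hjk, pow_add] at this
      exact Nat.le_of_mul_le_mul_left this (by positivity)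
    · exact hlow k (1 + j) (by omega)
  have hrel : ∀ j, j < m + 2 → (γ (1 + j + 1)).relIndex (γ (1 + j)) ≤ 2 := by
    intro j hj
    obtain ⟨k, hk⟩ : ∃ k, j + (k + 1) = m + 2 := ⟨m + 1 - j, by omega⟩
    have h1 := hcards j (k + 1) hk
    have h2 := hcards (j + 1) k (by omega)
    have h3 := hmul (1 + j)
    rw [h1, show 1 + j + 1 = 1 + (j + 1) by omega, h2, pow_succ] at h3
    exact (Nat.eq_of_mul_eq_mul_left (by positivity) h3).le
  -- the centralizer of the term of order four
  set C : Subgroup G := centralizer (γ (m + 1) : Set G) with hC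
  have := hchar (m + 1)
  have hCchar : C.Characteristic := by rw [hC]; infer_instance
  have hCtop : C ≠ ⊤ := by
    intro htop
    have : γ (m + 2) = ⊥ := by
      rw [hsucc, commutator_eq_bot_iff_le_centralizer, le_centralizer_iff, ← hC, htop]
    have := (hbot _).1 this
    omega
  have hcent : ∀ z ∈ γ (m + 2), ∀ g : G, g * z = z * g := by
    intro z hz g
    have := hcomm _ z hz g
    rw [(hbot (m + 2 + 1)).2 (by omega), mem_bot, commutatorElement_eq_one_iff_mul_comm] at this
    exact this.symm
  have hrelA : (γ (m + 2)).relIndex (γ (m + 1)) ≤ 2 := by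
    have := hrel m (by omega)
    rwa [show 1 + m = m + 1 by omega] at this
  have hrelZ : (⊥ : Subgroup G).relIndex (γ (m + 2)) ≤ 2 := by
    rw [relIndex_bot_left]
    have := hcards (m + 1) 1 (by omega)
    rw [show 1 + (m + 1) = m + 2 by omega] at this
    omega
  have hCstep : ∀ x y : G, x ∉ C → y ∉ C → x⁻¹ * y ∈ C := by
    intro x y hx hy
    rw [hC, mem_centralizer_iff] at hx hy ⊢
    push Not at hx hy
    obtain ⟨a, ha, hax⟩ := hx
    obtain ⟨b, hb, hby⟩ := hy
    have haz : a ∉ γ (m + 2) := fun h => hax (hcent a h x).symm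
    have hbz : b ∉ γ (m + 2) := fun h => hby (hcent b h y).symm
    have hab := two_step hrelA ha hb haz hbz
    -- `a` does not commute with `y` either
    have hay : a * y ≠ y * a := by
      intro h
      apply hby
      have hb' : b = a * (a⁻¹ * b) := by group
      rw [hb', mul_assoc, ← hcent _ hab y, ← mul_assoc, h, mul_assoc]
    have h1 : ⁅a, x⁆ ∉ (⊥ : Subgroup G) := by
      rw [mem_bot, commutatorElement_eq_one_iff_mul_comm]; exact hax
    have h2 : ⁅a, y⁆ ∉ (⊥ : Subgroup G) := by
      rw [mem_bot, commutatorElement_eq_one_iff_mul_comm]; exact hay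
    have h3 := two_step hrelZ (hcomm _ a ha x) (hcomm _ a ha y) h1 h2
    rw [mem_bot, inv_mul_eq_one] at h3
    have hcomma : a * (x⁻¹ * y) = x⁻¹ * y * a := by
      have h4 : x * a⁻¹ * x⁻¹ = y * a⁻¹ * y⁻¹ := by
        simp only [commutatorElement_def, mul_assoc] at h3
        simpa [mul_assoc] using h3
      have h5 : x * a * x⁻¹ = y * a * y⁻¹ := by
        have := congrArg (·⁻¹) h4
        simpa [mul_assoc] using this
      calc a * (x⁻¹ * y) = x⁻¹ * (x * a * x⁻¹) * y := by group
        _ = x⁻¹ * (y * a * y⁻¹) * y := by rw [h5]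
        _ = _ := by group
    intro c hc
    by_cases hcz : c ∈ γ (m + 2)
    · exact (hcent c hcz _).symm
    · have hac := two_step hrelA ha hc haz hcz
      have hc' : c = a * (a⁻¹ * c) := by group
      rw [hc', mul_assoc, ← hcent _ hac, ← mul_assoc, hcomma, mul_assoc]
  have hγC : γ 1 ≤ C := by
    rw [show γ 1 = ⁅(⊤ : Subgroup G), ⊤⁆ from rfl, commutator_le]
    intro x _ y _
    refine comm_mem hCstep (fun c hc g => ?_) x y
    rw [commutatorElement_def, mul_assoc, mul_assoc]
    refine C.mul_mem hc ?_
    rw [← mul_assoc]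
    exact (inferInstance : C.Normal).conj_mem _ (C.inv_mem hc) g
  have hrel1C : (γ 1).relIndex C ≤ 2 := by
    have h1 := relIndex_mul_index hγC
    rw [hidx.1] at h1
    have h2 : C.index ≠ 1 := fun h => hCtop (index_eq_one.1 h)
    have h3 : C.index ≠ 0 := index_ne_zero_of_finite
    have h4 : 2 ≤ C.index := by omega
    nlinarith
  have hrelC : C.relIndex ⊤ ≤ 2 := by
    obtain ⟨a, ha⟩ : ∃ a, a ∉ C := by
      by_contra h
      push Not at h
      exact hCtop (eq_top_iff.2 fun x _ => h x)
    rw [relIndex_top_right, index_eq_two_iff_exists_notMem_and'.2]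
    refine ⟨a⁻¹, by simpa using ha, fun b => ?_⟩
    by_cases hb : b ∈ C
    · exact Or.inr hb
    · exact Or.inl (hCstep a b ha hb)
  -- climb the chain
  intro φ
  have hchain : ∀ k j, j + k = m + 2 → ∃ e, ∀ x ∈ γ (1 + j), (φ ^ 2 ^ e) x = x := by
    intro k
    induction k with
    | zero =>
      intro j hj
      refine ⟨0, fun x hx => ?_⟩
      rw [(hbot _).2 (by omega), mem_bot] at hx
      simp [hx]
    | succ k ih =>
      intro j hj
      obtain ⟨e, he⟩ := ih (j + 1) (by omega)
      have := hchar (1 + j)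
      have := fix_step (hrel j (by omega)) (φ ^ 2 ^ e) he
      rw [← pow_mul, hcard, ← pow_add] at this
      exact ⟨_, this⟩
  obtain ⟨e, he⟩ := hchain (m + 2) 0 (by omega)
  have h1 := fix_step hrel1C (φ ^ 2 ^ e) he
  rw [← pow_mul, hcard, ← pow_add] at h1
  have h2 := fix_step hrelC _ h1
  rw [← pow_mul, hcard, ← pow_add] at h2
  exact ⟨_, MulEquiv.ext fun x => h2 x (mem_top x)⟩

end CoclassOne

/-- The automorphism group of any finite `2`-group of order `2 ^ n` with `n ≥ 4` and
maximal class `n - 1` (i.e. coclass `1`) is a `2`-group. -/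
theorem aut_isPGroup_of_coclass_one_of_card_ge
    {G : Type*} [Group G] [Finite G] [Group.IsNilpotent G] {n : ℕ} (hn : 4 ≤ n)
    (hcard : Nat.card G = 2 ^ n) (hclass : Group.nilpotencyClass G = n - 1) :
    IsPGroup 2 (MulAut G) := by
  exact CoclassOne.main hn hcard hclass
end
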